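/- For every bounded potential V : ℤ → ℝ and every ε > 0, there exists a limit-periodic potential V_lp : ℤ → ℝ with ‖V_lp‖_∞ < ε such that the discrete Schrödinger operator on ℓ²(ℤ) with potential V + V_lp has pure point spectrum. -/

import Mathlib

open MeasureTheory

noncomputable section

/-- `ψ ∈ ℓ²(ℤ)` is an eigenfunction of the discrete Schrödinger operator with potential `V`
corresponding to the eigenvalue `E`: `ψ ≠ 0` and `ψ(n+1) + ψ(n-1) + V(n)ψ(n) = Eψ(n)`. -/
def IsEigenfunction (V : ℤ → ℝ) (E : ℝ) (ψ : lp (fun _ : ℤ => ℝ) 2) : Prop :=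
  ψ ≠ 0 ∧ ∀ n : ℤ, (ψ : ∀ _ : ℤ, ℝ) (n + 1) + (ψ : ∀ _ : ℤ, ℝ) (n - 1)
    + V n * (ψ : ∀ _ : ℤ, ℝ) n = E * (ψ : ∀ _ : ℤ, ℝ) n

/-- The discrete Schrödinger operator with potential `V` has pure point spectrum:
its eigenfunctions span a dense subspace of `ℓ²(ℤ)`. -/
def HasPurePointSpectrum (V : ℤ → ℝ) : Prop :=
  (Submodule.span ℝ
    {ψ : lp (fun _ : ℤ => ℝ) 2 | ∃ E : ℝ, IsEigenfunction V E ψ}).topologicalClosure = ⊤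

/-- A potential is periodic if it is invariant under translation by some positive period. -/
def IsPeriodicPotential (W : ℤ → ℝ) : Prop :=
  ∃ p : ℕ, 0 < p ∧ ∀ n : ℤ, W (n + p) = W n

/-- A potential is limit-periodic if it is a uniform limit of periodic potentials. -/
def IsLimitPeriodic (V : ℤ → ℝ) : Prop :=
  ∀ ε > (0:ℝ), ∃ W : ℤ → ℝ, IsPeriodicPotential W ∧ ∀ n : ℤ, |V n - W n| ≤ ε

/-!
The perturbation is built scale by scale: a potential `P k` is perturbed, by a periodic potential of
size at most the reciprocal of the box size `N = s (k + 1)`, to a potential `P (k + 1)` that agrees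
with `P k` on `[-N, N]` and is nonresonant on a much larger box `[-N', N']`. Nonresonance says that
an eigenvector of the large box whose energy is close to one of the small box is tiny outside the
small box, and that an eigenvector of the large box that is visible in the small box is
exponentially small at the edges `±N'`.

Random perturbations that are independent and uniform outside `[-N, N]` are nonresonant with
positive probability. Moving a single potential value moves an eigenvalue at a speed equal to the
squared amplitude of the eigenvector there, which bounds the probability of a resonance in energy.
The expected inverse norm of a vector transported by random transfer matrices is governed by an
operator on the projective line, two steps of which contract `L²`; this makes a large amplitude at
the edge unlikely.

By nonresonance, an eigenvector localized in the small box is shadowed by one localized in the large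
box, and the errors are summable over the scales, so it is shadowed by a true `ℓ²` eigenfunction of
the limiting potential. If `f` is orthogonal to all eigenfunctions, expand it in the eigenvectors of
a box: those that are visible near the origin are small at the edges and hence close to combinations
of localized eigenvectors of the next box, to which `f` is almost orthogonal; the others barely
contribute to the values of `f` near the origin.
-/

open scoped ENNReal NNReal

/-! ### Box eigenvectors -/

/-- The formal action of the discrete Schrödinger operator with potential `U` on sequences, with
no summability condition. -/
def schrodinger (U φ : ℤ → ℝ) (n : ℤ) : ℝ := φ (n + 1) + φ (n - 1) + U n * φ n

lemma schrodinger_eq_unit (U φ : ℤ → ℝ) (σ : ℤˣ) (n : ℤ) :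
    schrodinger U φ n = φ (n + σ) + φ (n - σ) + U n * φ n := by
  rcases Int.units_eq_one_or σ with rfl | rfl <;> simp [schrodinger, add_comm, ← sub_eq_add_neg]

/-- The discrete Wronskian of two sequences. -/
def wronskian (f g : ℤ → ℝ) (n : ℤ) : ℝ := f (n + 1) * g n - f n * g (n + 1)

lemma sum_Icc_sub_sub_one {A : Type*} [AddCommGroup A] (W : ℤ → A) {a b : ℤ} (h : a - 1 ≤ b) :
    ∑ n ∈ Finset.Icc a b, (W n - W (n - 1)) = W b - W (a - 1) := by
  induction b, h using Int.leInduction with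
  | base => simp
  | succ b hb ih =>
    rw [← Finset.insert_Icc_right_eq_Icc_add_one (by omega), Finset.sum_insert (by simp), ih,
      add_sub_cancel_right, sub_add_sub_cancel]

lemma sum_schrodinger_mul_sub (U f g : ℤ → ℝ) {a b : ℤ} (h : a - 1 ≤ b) :
    ∑ n ∈ Finset.Icc a b, (schrodinger U f n * g n - f n * schrodinger U g n)
      = wronskian f g b - wronskian f g (a - 1) := by
  rw [← sum_Icc_sub_sub_one (wronskian f g) h]
  refine Finset.sum_congr rfl fun n _ => ?_
  simp only [schrodinger, wronskian, sub_add_cancel]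
  ring

lemma le_mul_pow_of_two_step {a : ℕ → ℝ} {K c : ℝ} (hK : 0 ≤ K) (hc : 0 ≤ c) {m : ℕ}
    (h0 : a 0 ≤ c) (h1 : a 1 ≤ c) (hrec : ∀ i < m, a (i + 2) ≤ K * a (i + 1) + a i + c) :
    ∀ i ≤ m, a i ≤ c * (K + 2) ^ (i - 1) ∧ a (i + 1) ≤ c * (K + 2) ^ i := by
  intro i hi
  induction i with
  | zero => simpa using ⟨h0, h1⟩
  | succ i ih =>
    obtain ⟨ih₀, ih₁⟩ := ih (by omega)
    refine ⟨ih₁, ?_⟩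
    have hbase : 1 ≤ K + 2 := by linarith
    calc a (i + 2) ≤ K * a (i + 1) + a i + c := hrec i hi
      _ ≤ K * (c * (K + 2) ^ i) + c * (K + 2) ^ (i - 1) + c * 1 := by rw [mul_one]; gcongr
      _ ≤ K * (c * (K + 2) ^ i) + c * (K + 2) ^ i + c * (K + 2) ^ i := by
          gcongr
          · omega
          · exact one_le_pow₀ hbase
      _ = c * (K + 2) ^ (i + 1) := by ring

/-- The truncated exponent makes the bound at `i = 0` the hypothesis `|f q| ≤ c`. -/
lemma abs_le_of_approx_solution {U f : ℤ → ℝ} {E K c : ℝ} {σ : ℤˣ} {q : ℤ} {m : ℕ}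
    (hK : ∀ n, |E - U n| ≤ K) (h0 : |f q| ≤ c) (h1 : |f (q + σ)| ≤ c)
    (h : ∀ i < m, |schrodinger U f (q + σ * (i + 1)) - E * f (q + σ * (i + 1))| ≤ c) :
    |f (q + σ * m)| ≤ c * (K + 2) ^ (m - 1) := by
  refine (le_mul_pow_of_two_step (a := fun i => |f (q + σ * i)|) (m := m)
    ((abs_nonneg _).trans (hK 0)) ((abs_nonneg _).trans h0) (by simpa using h0)
    (by simpa using h1) (fun i hi => ?_) m le_rfl).1
  set n : ℤ := q + σ * (i + 1) with hn
  have next : q + σ * ((i + 2 : ℕ) : ℤ) = n + σ := by rw [hn]; push_cast; ring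
  have current : q + σ * ((i + 1 : ℕ) : ℤ) = n := by rw [hn]; push_cast; ring
  have previous : q + σ * (i : ℤ) = n - σ := by rw [hn]; ring
  simp only [next, current, previous]
  have split : f (n + σ) = (E - U n) * f n - f (n - σ) + (schrodinger U f n - E * f n) := by
    rw [schrodinger_eq_unit U f σ]; ring
  calc |f (n + σ)| ≤ |E - U n| * |f n| + |f (n - σ)| + |schrodinger U f n - E * f n| := by
        rw [split, ← abs_mul]
        exact (abs_add_le _ _).trans (by gcongr; exact abs_sub _ _)
    _ ≤ K * |f n| + |f (n - σ)| + c := by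
        gcongr
        · exact hK n
        · exact h i hi

/-- The lattice interval `[-N, N]`. -/
abbrev latticeBox (N : ℕ) : Finset ℤ := Finset.Icc (-(N : ℤ)) N

lemma card_latticeBox (N : ℕ) : (latticeBox N).card = 2 * N + 1 := by
  rw [Int.card_Icc]; omega

lemma latticeBox_mono : Monotone latticeBox := fun N N' h n => by
  simp only [Finset.mem_Icc]; omega

lemma sum_sq_latticeBox_le {N : ℕ} {s : Finset ℤ} (hs : s ⊆ latticeBox N) {f : ℤ → ℝ} {c : ℝ}
    (hf : ∀ n ∈ s, |f n| ≤ c) : ∑ n ∈ s, f n ^ 2 ≤ (2 * N + 1) * c ^ 2 :=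
  calc ∑ n ∈ s, f n ^ 2 ≤ s.card • c ^ 2 := Finset.sum_le_card_nsmul _ _ _ fun n hn =>
        sq_le_sq' (abs_le.1 (hf n hn)).1 (abs_le.1 (hf n hn)).2
    _ ≤ (latticeBox N).card • c ^ 2 := by gcongr
    _ = (2 * N + 1) * c ^ 2 := by rw [card_latticeBox, nsmul_eq_mul]; push_cast; ring

lemma exists_sq_ge_of_le_sum_sq {N : ℕ} {f : ℤ → ℝ} {c : ℝ}
    (h : (2 * N + 1) * c ≤ ∑ n ∈ latticeBox N, f n ^ 2) : ∃ q ∈ latticeBox N, c ≤ f q ^ 2 := by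
  refine Finset.exists_le_of_sum_le (s := latticeBox N) ⟨0, by simp⟩ ?_
  rw [Finset.sum_const, card_latticeBox, nsmul_eq_mul]
  exact_mod_cast h

lemma abs_sum_mul_le_half {ι : Type*} (s : Finset ι) (f g : ι → ℝ) :
    |∑ i ∈ s, f i * g i| ≤ (∑ i ∈ s, f i ^ 2 + ∑ i ∈ s, g i ^ 2) / 2 := by
  rw [← Finset.sum_add_distrib, Finset.sum_div]
  refine (Finset.abs_sum_le_sum_abs _ _).trans (Finset.sum_le_sum fun i _ => ?_)
  rw [abs_mul, ← sq_abs (f i), ← sq_abs (g i)]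
  linarith [two_mul_le_add_sq |f i| |g i|]

/-- `φ` is a normalized eigenvector, with eigenvalue `E`, of the Schrödinger operator with
potential `U` restricted to `[-N, N]` with Dirichlet boundary conditions, extended by zero. -/
structure IsBoxEigenvector (U : ℤ → ℝ) (N : ℕ) (E : ℝ) (φ : ℤ → ℝ) : Prop where
  eq_zero : ∀ n ∉ latticeBox N, φ n = 0
  schrodinger_eq : ∀ n ∈ latticeBox N, schrodinger U φ n = E * φ n
  sum_sq : ∑ n ∈ latticeBox N, φ n ^ 2 = 1

namespace IsBoxEigenvector

variable {U U' : ℤ → ℝ} {N N' : ℕ} {e E E₁ E₂ M : ℝ} {ψ φ φ₁ φ₂ : ℤ → ℝ}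

lemma congr (hψ : IsBoxEigenvector U N e ψ) (h : ∀ n ∈ latticeBox N, U' n = U n) :
    IsBoxEigenvector U' N e ψ :=
  ⟨hψ.eq_zero, fun n hn => by rw [← hψ.schrodinger_eq n hn, schrodinger, schrodinger, h n hn],
    hψ.sum_sq⟩

lemma neg (hψ : IsBoxEigenvector U N e ψ) : IsBoxEigenvector U N e (-ψ) :=
  ⟨fun n hn => by simp [hψ.eq_zero n hn],
    fun n hn => by
      have := hψ.schrodinger_eq n hn
      simp only [schrodinger, Pi.neg_apply] at this ⊢
      linear_combination -this,
    by simpa using hψ.sum_sq⟩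

lemma eq_zero_right (hψ : IsBoxEigenvector U N e ψ) : ψ (N + 1) = 0 := hψ.eq_zero _ (by simp)

lemma eq_zero_left (hψ : IsBoxEigenvector U N e ψ) : ψ (-N - 1) = 0 := hψ.eq_zero _ (by simp)

lemma sum_mul_of_le (hψ : IsBoxEigenvector U N e ψ) (h : N ≤ N') (f : ℤ → ℝ) :
    ∑ n ∈ latticeBox N', ψ n * f n = ∑ n ∈ latticeBox N, ψ n * f n :=
  (Finset.sum_subset (latticeBox_mono h) fun n _ hn => by rw [hψ.eq_zero n hn, zero_mul]).symm

lemma sum_sq_of_le (hψ : IsBoxEigenvector U N e ψ) (h : N ≤ N') :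
    ∑ n ∈ latticeBox N', ψ n ^ 2 = 1 := by
  simpa only [← sq, hψ.sum_sq] using hψ.sum_mul_of_le h ψ

lemma abs_le_one (hψ : IsBoxEigenvector U N e ψ) (n : ℤ) : |ψ n| ≤ 1 := by
  by_cases hn : n ∈ latticeBox N
  · rw [← sq_le_one_iff_abs_le_one, ← hψ.sum_sq]
    exact Finset.single_le_sum (f := fun n => ψ n ^ 2) (fun _ _ => sq_nonneg _) hn
  · simp [hψ.eq_zero n hn]

lemma exists_apply_ne_zero (hψ : IsBoxEigenvector U N e ψ) : ∃ n ∈ latticeBox N, ψ n ≠ 0 := by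
  by_contra! h
  have := hψ.sum_sq
  rw [Finset.sum_eq_zero fun n hn => by rw [h n hn, zero_pow two_ne_zero]] at this
  exact zero_ne_one this

lemma abs_energy_le (hψ : IsBoxEigenvector U N e ψ) (hU : ∀ n, |U n| ≤ M) : |e| ≤ M + 2 := by
  obtain ⟨q, hq, hmax⟩ := Finset.exists_max_image (latticeBox N) (fun n => |ψ n|) ⟨0, by simp⟩
  have hle : ∀ n, |ψ n| ≤ |ψ q| := fun n => by
    by_cases hn : n ∈ latticeBox N
    · exact hmax n hn
    · simp [hψ.eq_zero n hn]
  have hpos : 0 < |ψ q| := by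
    obtain ⟨n, -, hn⟩ := hψ.exists_apply_ne_zero
    exact (abs_pos.2 hn).trans_le (hle n)
  refine le_of_mul_le_mul_right ?_ hpos
  calc |e| * |ψ q| = |ψ (q + 1) + ψ (q - 1) + U q * ψ q| := by
        rw [← abs_mul, ← hψ.schrodinger_eq q hq, schrodinger]
    _ ≤ |ψ (q + 1)| + |ψ (q - 1)| + |U q| * |ψ q| := by
        rw [← abs_mul]; exact abs_add_three _ _ _
    _ ≤ |ψ q| + |ψ q| + M * |ψ q| :=
        add_le_add (add_le_add (hle _) (hle _)) (by gcongr; exact hU q)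
    _ = (M + 2) * |ψ q| := by ring

lemma abs_energy_sub_le (hψ : IsBoxEigenvector U N e ψ) (hU : ∀ n, |U n| ≤ M) (n : ℤ) :
    |e - U n| ≤ 2 * M + 2 :=
  (abs_sub _ _).trans (by linarith [hψ.abs_energy_le hU, hU n])

lemma energy_sub_mul_sum (hψ : IsBoxEigenvector U N e ψ)
    (hφ : ∀ n ∈ latticeBox N, schrodinger U' φ n = E * φ n) :
    (E - e) * ∑ n ∈ latticeBox N, ψ n * φ n
      = ψ N * φ (N + 1) + ψ (-N) * φ (-N - 1)
        + ∑ n ∈ latticeBox N, (U' n - U n) * (ψ n * φ n) := by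
  have green := sum_schrodinger_mul_sub U φ ψ (a := -N) (b := N) (by omega)
  have hsummand : ∀ n ∈ latticeBox N, schrodinger U φ n * ψ n - φ n * schrodinger U ψ n
      = (E - e) * (ψ n * φ n) - (U' n - U n) * (ψ n * φ n) := fun n hn => by
    have := hφ n hn
    rw [hψ.schrodinger_eq n hn]
    simp only [schrodinger] at this ⊢
    linear_combination ψ n * this
  rw [Finset.sum_congr rfl hsummand, Finset.sum_sub_distrib, ← Finset.mul_sum] at green
  simp only [wronskian, sub_add_cancel, hψ.eq_zero_right, hψ.eq_zero_left] at green
  linarith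

lemma sum_mul_eq_zero (h₁ : IsBoxEigenvector U N E₁ φ₁) (h₂ : IsBoxEigenvector U N E₂ φ₂)
    (hne : E₁ ≠ E₂) : ∑ n ∈ latticeBox N, φ₁ n * φ₂ n = 0 := by
  have := h₁.energy_sub_mul_sum h₂.schrodinger_eq
  simp only [h₂.eq_zero_right, h₂.eq_zero_left, sub_self, zero_mul, mul_zero,
    Finset.sum_const_zero, add_zero] at this
  exact (mul_eq_zero.1 this).resolve_left (sub_ne_zero.2 hne.symm)

lemma abs_wronskian_le (h₁ : IsBoxEigenvector U N E₁ φ₁) (h₂ : IsBoxEigenvector U N E₂ φ₂)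
    {n : ℤ} (hn : -(N : ℤ) - 1 ≤ n) (hn' : n ≤ N) : |wronskian φ₁ φ₂ n| ≤ |E₁ - E₂| := by
  have hsub : Finset.Icc (-(N : ℤ)) n ⊆ latticeBox N := Finset.Icc_subset_Icc_right hn'
  have green := sum_schrodinger_mul_sub U φ₁ φ₂ hn
  have hsummand : ∀ k ∈ Finset.Icc (-(N : ℤ)) n,
      schrodinger U φ₁ k * φ₂ k - φ₁ k * schrodinger U φ₂ k = (E₁ - E₂) * (φ₁ k * φ₂ k) :=
    fun k hk => by
      rw [h₁.schrodinger_eq k (hsub hk), h₂.schrodinger_eq k (hsub hk)]; ring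
  have hleft : wronskian φ₁ φ₂ (-N - 1) = 0 := by
    rw [wronskian, h₁.eq_zero_left, h₂.eq_zero_left, mul_zero, zero_mul, sub_zero]
  rw [Finset.sum_congr rfl hsummand, hleft, sub_zero, ← Finset.mul_sum] at green
  have hmass : ∀ {E' φ}, IsBoxEigenvector U N E' φ →
      ∑ k ∈ Finset.Icc (-(N : ℤ)) n, φ k ^ 2 ≤ 1 := fun h =>
    (Finset.sum_le_sum_of_subset_of_nonneg hsub fun _ _ _ => sq_nonneg _).trans_eq h.sum_sq
  rw [← green, abs_mul]
  refine mul_le_of_le_one_right (abs_nonneg _) ((abs_sum_mul_le_half _ _ _).trans ?_)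
  linarith [hmass h₁, hmass h₂]

lemma abs_unit_step_mul_sub_mul_le (h₁ : IsBoxEigenvector U N' E₁ φ₁)
    (h₂ : IsBoxEigenvector U N' E₂ φ₂) {q : ℤ} (hq : q ∈ latticeBox N') (σ : ℤˣ) :
    |φ₂ q * φ₁ (q + σ) - φ₁ q * φ₂ (q + σ)| ≤ |E₁ - E₂| := by
  rw [Finset.mem_Icc] at hq
  rcases Int.units_eq_one_or σ with rfl | rfl
  · refine le_trans (le_of_eq ?_) (h₁.abs_wronskian_le h₂ (n := q) (by omega) (by omega))
    congr 1
    simp only [wronskian, Units.val_one]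
    ring
  · refine le_trans (le_of_eq ?_) (h₁.abs_wronskian_le h₂ (n := q - 1) (by omega) (by omega))
    rw [← abs_neg]
    congr 1
    simp only [wronskian, sub_add_cancel, Units.val_neg, Units.val_one, ← sub_eq_add_neg]
    ring

/-- The combination vanishing at `q` solves the eigenvalue equation up to an error `|E₁ - E₂|`, and
its values next to `q` are Wronskians. -/
lemma abs_mul_sub_mul_le (h₁ : IsBoxEigenvector U N' E₁ φ₁) (h₂ : IsBoxEigenvector U N' E₂ φ₂)
    (hU : ∀ n, |U n| ≤ M) (hN : N ≤ N') {q n : ℤ} (hq : q ∈ latticeBox N)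
    (hn : n ∈ latticeBox N) :
    |φ₂ q * φ₁ n - φ₁ q * φ₂ n| ≤ |E₁ - E₂| * (2 * M + 4) ^ (2 * N) := by
  have hM : 0 ≤ M := (abs_nonneg _).trans (hU 0)
  set χ : ℤ → ℝ := fun n => φ₂ q * φ₁ n - φ₁ q * φ₂ n with hχ
  have hqN := hq
  rw [Finset.mem_Icc] at hq hn
  obtain ⟨σ, hσ⟩ : ∃ σ : ℤˣ, n = q + σ * (n - q).natAbs := by
    rcases le_total q n with h | h
    · exact ⟨1, by simp only [Units.val_one]; omega⟩
    · exact ⟨-1, by simp only [Units.val_neg, Units.val_one]; omega⟩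
  have hstart : |χ (q + σ)| ≤ |E₁ - E₂| :=
    h₁.abs_unit_step_mul_sub_mul_le h₂ (latticeBox_mono hN hqN) σ
  have hsolve : ∀ i < (n - q).natAbs,
      |schrodinger U χ (q + σ * (i + 1)) - E₁ * χ (q + σ * (i + 1))| ≤ |E₁ - E₂| := by
    intro i hi
    set k : ℤ := q + σ * (i + 1) with hk
    have hmem : k ∈ latticeBox N' := by
      rw [Finset.mem_Icc]
      rcases Int.units_eq_one_or σ with rfl | rfl <;>
        simp only [Units.val_neg, Units.val_one] at hσ hk <;> omega
    have herr : schrodinger U χ k - E₁ * χ k = (E₁ - E₂) * (φ₁ q * φ₂ k) := by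
      have eq₁ := h₁.schrodinger_eq k hmem
      have eq₂ := h₂.schrodinger_eq k hmem
      simp only [schrodinger, hχ] at eq₁ eq₂ ⊢
      linear_combination φ₂ q * eq₁ - φ₁ q * eq₂
    rw [herr, abs_mul, abs_mul]
    exact mul_le_of_le_one_right (abs_nonneg _)
      (mul_le_one₀ (h₁.abs_le_one q) (abs_nonneg _) (h₂.abs_le_one k))
  have hgrowth := abs_le_of_approx_solution (h₁.abs_energy_sub_le hU)
    (by simp [hχ, mul_comm]) hstart hsolve
  rw [← hσ, show 2 * M + 2 + 2 = 2 * M + 4 by ring] at hgrowth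
  refine hgrowth.trans ?_
  gcongr
  · linarith
  · omega

lemma eq_or_eq_neg (h₁ : IsBoxEigenvector U N E φ₁) (h₂ : IsBoxEigenvector U N E φ₂)
    (hU : ∀ n, |U n| ≤ M) : φ₂ = φ₁ ∨ φ₂ = -φ₁ := by
  set c := ∑ q ∈ latticeBox N, φ₁ q * φ₂ q
  have hparallel : ∀ n, φ₂ n = c * φ₁ n := fun n => by
    by_cases hn : n ∈ latticeBox N
    · have hcross : ∀ q ∈ latticeBox N, φ₁ q * (φ₂ q * φ₁ n) = φ₁ q * (φ₁ q * φ₂ n) :=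
        fun q hq => by
          have := h₁.abs_mul_sub_mul_le h₂ hU le_rfl hq hn
          rw [sub_self, abs_zero, zero_mul, abs_nonpos_iff, sub_eq_zero] at this
          rw [this]
      have := Finset.sum_congr rfl hcross
      simp only [← mul_assoc, ← Finset.sum_mul, ← sq, h₁.sum_sq, one_mul] at this
      exact this.symm
    · rw [h₁.eq_zero n hn, h₂.eq_zero n hn, mul_zero]
  have hc_sq : c ^ 2 = 1 := by
    have := h₂.sum_sq
    simpa only [hparallel, mul_pow, ← Finset.mul_sum, h₁.sum_sq, mul_one] using this
  rcases (by simpa using hc_sq : c = 1 ∨ c = -1) with h | h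
  · left; ext n; simp [hparallel n, h]
  · right; ext n; simp [hparallel n, h]

end IsBoxEigenvector

lemma sum_sum_sq_mul_sub_mul {ι : Type*} (s : Finset ι) (f g : ι → ℝ) :
    ∑ i ∈ s, ∑ j ∈ s, (g i * f j - f i * g j) ^ 2
      = 2 * ((∑ i ∈ s, f i ^ 2) * ∑ i ∈ s, g i ^ 2 - (∑ i ∈ s, f i * g i) ^ 2) := by
  have expand : ∀ i j, (g i * f j - f i * g j) ^ 2
      = g i ^ 2 * f j ^ 2 + f i ^ 2 * g j ^ 2 - 2 * (f i * g i * (f j * g j)) := fun i j => by ring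
  simp only [expand, Finset.sum_sub_distrib, Finset.sum_add_distrib, ← Finset.mul_sum,
    ← Finset.sum_mul]
  ring

namespace IsBoxEigenvector

variable {U : ℤ → ℝ} {N N' : ℕ} {e E₁ E₂ M κ : ℝ} {ψ φ₁ φ₂ : ℤ → ℝ}

lemma abs_sum_mul_inner_box_le (h₁ : IsBoxEigenvector U N' E₁ φ₁)
    (h₂ : IsBoxEigenvector U N' E₂ φ₂) (hN : N ≤ N') (hne : E₁ ≠ E₂) {c : ℝ}
    (hm₁ : ∑ n ∈ latticeBox N' \ latticeBox N, φ₁ n ^ 2 ≤ c)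
    (hm₂ : ∑ n ∈ latticeBox N' \ latticeBox N, φ₂ n ^ 2 ≤ c) :
    |∑ n ∈ latticeBox N, φ₁ n * φ₂ n| ≤ c := by
  have split := Finset.sum_sdiff (f := fun n => φ₁ n * φ₂ n) (latticeBox_mono hN)
  rw [h₁.sum_mul_eq_zero h₂ hne] at split
  rw [eq_neg_of_add_eq_zero_right split, abs_neg]
  exact (abs_sum_mul_le_half _ _ _).trans (by linarith)

/-- Lagrange's identity bounds the sum of the squared cross products below by `1`, since
`2 * (3 / 4 * (3 / 4) - (1 / 4) ^ 2) = 1`. -/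
lemma one_le_abs_energy_sub_mul (h₁ : IsBoxEigenvector U N' E₁ φ₁)
    (h₂ : IsBoxEigenvector U N' E₂ φ₂) (hU : ∀ n, |U n| ≤ M) (hN : N ≤ N') (hne : E₁ ≠ E₂)
    (hm₁ : ∑ n ∈ latticeBox N' \ latticeBox N, φ₁ n ^ 2 ≤ 1 / 4)
    (hm₂ : ∑ n ∈ latticeBox N' \ latticeBox N, φ₂ n ^ 2 ≤ 1 / 4) :
    1 ≤ |E₁ - E₂| * ((2 * M + 4) ^ (2 * N) * (2 * N + 1)) := by
  have hM : 0 ≤ M := (abs_nonneg _).trans (hU 0)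
  set ξ := |E₁ - E₂| * (2 * M + 4) ^ (2 * N) with hξ
  have upper : ∑ q ∈ latticeBox N, ∑ n ∈ latticeBox N, (φ₂ q * φ₁ n - φ₁ q * φ₂ n) ^ 2
      ≤ ((2 * N + 1) * ξ) ^ 2 := by
    calc _ ≤ (latticeBox N).card • ((2 * N + 1) * ξ ^ 2) :=
          Finset.sum_le_card_nsmul _ _ _ fun q hq => sum_sq_latticeBox_le subset_rfl fun n hn =>
            h₁.abs_mul_sub_mul_le h₂ hU hN hq hn
      _ = ((2 * N + 1) * ξ) ^ 2 := by rw [card_latticeBox, nsmul_eq_mul]; push_cast; ring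
  have mass : ∀ {E φ}, IsBoxEigenvector U N' E φ →
      ∑ n ∈ latticeBox N' \ latticeBox N, φ n ^ 2 ≤ 1 / 4 →
      3 / 4 ≤ ∑ n ∈ latticeBox N, φ n ^ 2 := fun {_ φ} h hm => by
    have := Finset.sum_sdiff (f := fun n => φ n ^ 2) (latticeBox_mono hN)
    linarith [h.sum_sq]
  have overlap := sq_le_sq' (abs_le.1 (h₁.abs_sum_mul_inner_box_le h₂ hN hne hm₁ hm₂)).1
    (abs_le.1 (h₁.abs_sum_mul_inner_box_le h₂ hN hne hm₁ hm₂)).2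
  rw [sum_sum_sq_mul_sub_mul] at upper
  have masses := mul_le_mul (mass h₁ hm₁) (mass h₂ hm₂) (by norm_num)
    (Finset.sum_nonneg fun n _ => sq_nonneg (φ₁ n))
  have hone : 1 ≤ (2 * N + 1) * ξ :=
    (one_le_sq_iff₀ (by positivity)).1 (by linarith)
  rwa [hξ, mul_comm, mul_assoc] at hone

lemma exists_le_abs_apply_boundary (hψ : IsBoxEigenvector U N' e ψ) (hU : ∀ n, |U n| ≤ M)
    (hN : N + 2 ≤ N') {n : ℤ} (hn : n ∈ latticeBox N)
    (h : κ * (2 * M + 4) ^ (2 * N + 1) < |ψ n|) (σ : ℤˣ) :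
    ∃ k ∈ ({1, 2} : Finset ℕ), κ ≤ |ψ (σ * (N + k : ℕ))| := by
  by_contra! small
  have hM : 0 ≤ M := (abs_nonneg _).trans (hU 0)
  have small₁ := (small 1 (by simp)).le
  have small₂ := (small 2 (by simp)).le
  push_cast at small₁ small₂
  have hκ : 0 ≤ κ := (abs_nonneg _).trans small₁
  rw [Finset.mem_Icc] at hn
  obtain ⟨m, hm, hm'⟩ : ∃ m : ℕ, m ≤ 2 * N + 2 ∧ (σ : ℤ) * (N + 2) + (-σ : ℤˣ) * m = n := by
    rcases Int.units_eq_one_or σ with rfl | rfl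
    · exact ⟨(N + 2 - n).toNat, by omega, by push_cast; omega⟩
    · exact ⟨(N + 2 + n).toNat, by omega, by push_cast; omega⟩
  have neighbour : (σ : ℤ) * (N + 2) + (-σ : ℤˣ) = σ * (N + 1) := by push_cast; ring
  have hgrowth := abs_le_of_approx_solution (σ := -σ) (m := m) (hψ.abs_energy_sub_le hU) small₂
    (by rwa [neighbour]) fun i hi => by
      rw [hψ.schrodinger_eq _ ?_, sub_self, abs_zero]
      · exact hκ
      · rw [Finset.mem_Icc]
        rcases Int.units_eq_one_or σ with rfl | rfl <;> push_cast at hm' ⊢ <;> omega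
  rw [hm', show 2 * M + 2 + 2 = 2 * M + 4 by ring] at hgrowth
  refine (h.trans_le hgrowth).not_ge ?_
  gcongr
  · linarith
  · omega

end IsBoxEigenvector

/-- An orthonormal basis of `ℓ²([-N, N])` made of box eigenvectors. Orthonormality is encoded by
Parseval's identity. -/
structure IsBoxEigenbasis (U : ℤ → ℝ) (N : ℕ) (E : Fin (2 * N + 1) → ℝ)
    (φ : Fin (2 * N + 1) → ℤ → ℝ) : Prop where
  isBoxEigenvector : ∀ j, IsBoxEigenvector U N (E j) (φ j)
  sum_mul_sum : ∀ f g : ℤ → ℝ,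
    ∑ j, (∑ n ∈ latticeBox N, φ j n * f n) * ∑ n ∈ latticeBox N, φ j n * g n
      = ∑ n ∈ latticeBox N, f n * g n

/-- The extension by zero of a vector on `[-N, N]` to the whole lattice. -/
def zeroExtension {N : ℕ} (x : EuclideanSpace ℝ (latticeBox N)) : ℤ → ℝ :=
  Function.extend Subtype.val x 0

section ZeroExtension

variable {N : ℕ} (x : EuclideanSpace ℝ (latticeBox N))

@[simp] lemma zeroExtension_coe (n : latticeBox N) : zeroExtension x n = x n :=
  Subtype.val_injective.extend_apply _ _ _

lemma zeroExtension_of_notMem {n : ℤ} (hn : n ∉ latticeBox N) : zeroExtension x n = 0 :=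
  Function.extend_apply' _ _ _ fun ⟨m, hm⟩ => hn (hm ▸ m.2)

lemma inner_eq_sum_zeroExtension_mul (f : ℤ → ℝ) :
    inner ℝ x (WithLp.toLp 2 fun n : latticeBox N => f n)
      = ∑ n ∈ latticeBox N, zeroExtension x n * f n := by
  rw [← Finset.sum_coe_sort (latticeBox N)]
  simp [PiLp.inner_apply, mul_comm]

/-- The Schrödinger operator with potential `U` restricted to `[-N, N]` with Dirichlet boundary
conditions. -/
def boxSchrodinger (U : ℤ → ℝ) (N : ℕ) :
    EuclideanSpace ℝ (latticeBox N) →ₗ[ℝ] EuclideanSpace ℝ (latticeBox N) where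
  toFun x := WithLp.toLp 2 fun n => schrodinger U (zeroExtension x) n
  map_add' x y := by
    ext n
    have add (m : ℤ) : zeroExtension (x + y) m = zeroExtension x m + zeroExtension y m := by
      by_cases hm : m ∈ latticeBox N
      · lift m to latticeBox N using hm; simp
      · simp [zeroExtension_of_notMem, hm]
    simp only [schrodinger, add, PiLp.add_apply]
    ring
  map_smul' c x := by
    ext n
    have smul (m : ℤ) : zeroExtension (c • x) m = c * zeroExtension x m := by
      by_cases hm : m ∈ latticeBox N
      · lift m to latticeBox N using hm; simp
      · simp [zeroExtension_of_notMem, hm]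
    simp only [schrodinger, smul, PiLp.smul_apply, RingHom.id_apply, smul_eq_mul]
    ring

lemma boxSchrodinger_isSymmetric (U : ℤ → ℝ) (N : ℕ) : (boxSchrodinger U N).IsSymmetric := by
  intro x y
  have green := sum_schrodinger_mul_sub U (zeroExtension x) (zeroExtension y)
    (a := -N) (b := N) (by omega)
  have right (z : EuclideanSpace ℝ (latticeBox N)) : zeroExtension z (N + 1) = 0 :=
    zeroExtension_of_notMem z (by simp)
  have left (z : EuclideanSpace ℝ (latticeBox N)) : zeroExtension z (-N - 1) = 0 :=
    zeroExtension_of_notMem z (by simp)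
  simp only [wronskian, right, left, sub_add_cancel, mul_zero, zero_mul, sub_self,
    Finset.sum_sub_distrib, sub_eq_zero] at green
  rw [real_inner_comm]
  refine (inner_eq_sum_zeroExtension_mul y _).trans (Eq.trans ?_
    (inner_eq_sum_zeroExtension_mul x (schrodinger U (zeroExtension y))).symm)
  simpa only [mul_comm] using green

end ZeroExtension

lemma exists_isBoxEigenbasis (U : ℤ → ℝ) (N : ℕ) : ∃ E φ, IsBoxEigenbasis U N E φ := by
  have hT := boxSchrodinger_isSymmetric U N
  have hn : Module.finrank ℝ (EuclideanSpace ℝ (latticeBox N)) = 2 * N + 1 := by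
    rw [finrank_euclideanSpace, Fintype.card_coe, card_latticeBox]
  set b := hT.eigenvectorBasis hn
  refine ⟨hT.eigenvalues hn, fun j => zeroExtension (b j), fun j => ⟨fun n hn =>
    zeroExtension_of_notMem _ hn, fun n hn => ?_, ?_⟩, fun f g => ?_⟩
  · lift n to latticeBox N using hn
    rw [zeroExtension_coe]
    exact congrArg (fun x => x.ofLp n) (hT.apply_eigenvectorBasis hn j)
  · simp [sq, ← inner_eq_sum_zeroExtension_mul]
  · simp only [← inner_eq_sum_zeroExtension_mul]
    simp only [← real_inner_comm (b _) (WithLp.toLp 2 fun n : latticeBox N => f n)]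
    rw [b.sum_inner_mul_inner, ← Finset.sum_coe_sort (latticeBox N)]
    simp [PiLp.inner_apply, mul_comm]

/-! ### Nonresonant extensions -/

namespace IsBoxEigenbasis

variable {U : ℤ → ℝ} {N N' : ℕ} {E : Fin (2 * N + 1) → ℝ} {φ : Fin (2 * N + 1) → ℤ → ℝ}
  {E' : Fin (2 * N' + 1) → ℝ} {φ' : Fin (2 * N' + 1) → ℤ → ℝ} {e δ h R Z : ℝ} {ψ f : ℤ → ℝ}

lemma sum_sq_coeff (hb : IsBoxEigenbasis U N E φ) (f : ℤ → ℝ) :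
    ∑ j, (∑ n ∈ latticeBox N, φ j n * f n) ^ 2 = ∑ n ∈ latticeBox N, f n ^ 2 := by
  simpa only [← sq] using hb.sum_mul_sum f f

lemma sum_sq_two_point (hb : IsBoxEigenbasis U N E φ) {p q : ℤ} (hp : p ∈ latticeBox N)
    (hq : q ∈ latticeBox N) (hpq : p ≠ q) (a b : ℝ) :
    ∑ j, (φ j p * a + φ j q * b) ^ 2 = a ^ 2 + b ^ 2 := by
  have pair (ξ : ℤ → ℝ) :
      ∑ n ∈ latticeBox N, ξ n * (Pi.single p a + Pi.single q b : ℤ → ℝ) n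
        = ξ p * a + ξ q * b := by
    simp_rw [Pi.add_apply, mul_add, Finset.sum_add_distrib, Pi.single_apply, mul_ite, mul_zero,
      Finset.sum_ite_eq', if_pos hp, if_pos hq]
  have parseval := hb.sum_sq_coeff (Pi.single p a + Pi.single q b)
  simp_rw [sq, pair] at parseval
  simpa [sq, hpq, hpq.symm] using parseval

lemma sum_energy_sub_sq_mul_of_box (hb : IsBoxEigenbasis U N' E' φ')
    (hψ : IsBoxEigenvector U N e ψ) (hN : N < N') :
    ∑ j, ((E' j - e) * ∑ n ∈ latticeBox N', φ' j n * ψ n) ^ 2 = ψ N ^ 2 + ψ (-N) ^ 2 := by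
  rw [← hb.sum_sq_two_point (p := N + 1) (q := -N - 1)
    (by rw [Finset.mem_Icc]; omega) (by rw [Finset.mem_Icc]; omega) (by omega)]
  refine Finset.sum_congr rfl fun j _ => ?_
  simp_rw [mul_comm (φ' j _)]
  rw [hψ.sum_mul_of_le hN.le, hψ.energy_sub_mul_sum fun n hn =>
    (hb.isBoxEigenvector j).schrodinger_eq n (latticeBox_mono hN.le hn)]
  simp

lemma sum_energy_sub_sq_mul_of_solution (hb : IsBoxEigenbasis U N E φ) (hN : 0 < N)
    (hf : ∀ n ∈ latticeBox N, schrodinger U f n = e * f n) :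
    ∑ j, ((e - E j) * ∑ n ∈ latticeBox N, φ j n * f n) ^ 2
      = f (N + 1) ^ 2 + f (-N - 1) ^ 2 := by
  rw [← hb.sum_sq_two_point (p := N) (q := -N) (by simp) (by simp) (by omega)]
  refine Finset.sum_congr rfl fun j _ => ?_
  rw [(hb.isBoxEigenvector j).energy_sub_mul_sum hf]
  simp

lemma exists_energy_eq (hb : IsBoxEigenbasis U N E φ) (hψ : IsBoxEigenvector U N e ψ) :
    ∃ j, E j = e := by
  by_contra! hne
  have parseval := hb.sum_sq_coeff ψ
  rw [hψ.sum_sq, Finset.sum_eq_zero fun j _ => by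
    rw [(hb.isBoxEigenvector j).sum_mul_eq_zero hψ (hne j), zero_pow two_ne_zero]] at parseval
  exact zero_ne_one parseval

lemma sum_energy_sub_sq_mul_le (hb : IsBoxEigenbasis U N' E' φ')
    (hψ : IsBoxEigenvector U N e ψ) (hN : N < N') (hδ : ∀ σ : ℤˣ, |ψ (σ * N)| ≤ δ) :
    ∑ j, ((E' j - e) * ∑ n ∈ latticeBox N', φ' j n * ψ n) ^ 2 ≤ 2 * δ ^ 2 := by
  have right : |ψ N| ≤ δ := by simpa using hδ 1
  have left : |ψ (-N)| ≤ δ := by simpa using hδ (-1)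
  rw [hb.sum_energy_sub_sq_mul_of_box hψ hN, two_mul]
  exact add_le_add (sq_le_sq' (abs_le.1 right).1 (abs_le.1 right).2)
    (sq_le_sq' (abs_le.1 left).1 (abs_le.1 left).2)

lemma exists_abs_energy_sub_le (hb : IsBoxEigenbasis U N' E' φ')
    (hψ : IsBoxEigenvector U N e ψ) (hN : N < N') (hδ : ∀ σ : ℤˣ, |ψ (σ * N)| ≤ δ) (hh : 0 ≤ h)
    (hδh : 2 * δ ^ 2 < h ^ 2) : ∃ j, |E' j - e| ≤ h := by
  by_contra! far
  have lower : h ^ 2 * ∑ j, (∑ n ∈ latticeBox N', φ' j n * ψ n) ^ 2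
      ≤ ∑ j, ((E' j - e) * ∑ n ∈ latticeBox N', φ' j n * ψ n) ^ 2 := by
    rw [Finset.mul_sum]
    refine Finset.sum_le_sum fun j _ => ?_
    rw [mul_pow, ← sq_abs (E' j - e)]
    gcongr
    exact (far j).le
  rw [hb.sum_sq_coeff, hψ.sum_sq_of_le hN.le] at lower
  linarith [hb.sum_energy_sub_sq_mul_le hψ hN hδ]

lemma sum_abs_energy_sub_mul_le (hb : IsBoxEigenbasis U N' E' φ')
    (hψ : IsBoxEigenvector U N e ψ) (hN : N < N') (hδ : ∀ σ : ℤˣ, |ψ (σ * N)| ≤ δ) (hR : 0 ≤ R)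
    (hf : ∑ n ∈ latticeBox N', f n ^ 2 ≤ R ^ 2) :
    ∑ j, |(E' j - e) * ∑ n ∈ latticeBox N', φ' j n * ψ n|
      * |∑ n ∈ latticeBox N', φ' j n * f n| ≤ 2 * δ * R := by
  have hδ₀ : 0 ≤ δ := (abs_nonneg _).trans (hδ 1)
  refine (Real.sum_mul_le_sqrt_mul_sqrt _ _ _).trans ?_
  simp only [sq_abs]
  refine mul_le_mul (Real.sqrt_le_iff.2 ⟨by positivity, ?_⟩) (Real.sqrt_le_iff.2 ⟨hR, ?_⟩)
    (Real.sqrt_nonneg _) (by positivity)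
  · linarith [hb.sum_energy_sub_sq_mul_le hψ hN hδ, sq_nonneg δ]
  · rwa [hb.sum_sq_coeff]

/-- The components of `ψ` with energy farther than `h` from `e` are controlled by the values of `ψ`
at the edge of its box. -/
lemma abs_sum_mul_le (hb : IsBoxEigenbasis U N' E' φ') (hψ : IsBoxEigenvector U N e ψ)
    (hN : N < N') (hδ : ∀ σ : ℤˣ, |ψ (σ * N)| ≤ δ) (hh : 0 < h) (hR : 0 ≤ R)
    (hf : ∑ n ∈ latticeBox N', f n ^ 2 ≤ R ^ 2) (hZ : 0 ≤ Z)
    (hnear : ∀ j, |E' j - e| ≤ h → |∑ n ∈ latticeBox N', φ' j n * f n| ≤ Z) :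
    |∑ n ∈ latticeBox N, ψ n * f n| ≤ (2 * N' + 1) * Z + 2 * δ * R / h := by
  set c := fun j => ∑ n ∈ latticeBox N', φ' j n * ψ n
  set F := fun j => ∑ n ∈ latticeBox N', φ' j n * f n
  have hc (j) : |c j| ≤ 1 := by
    rw [← sq_le_one_iff_abs_le_one, ← hψ.sum_sq_of_le hN.le, ← hb.sum_sq_coeff]
    exact Finset.single_le_sum (f := fun j => c j ^ 2) (fun _ _ => sq_nonneg _)
      (Finset.mem_univ j)
  have term (j) : |c j * F j| ≤ Z + |(E' j - e) * c j| * |F j| / h := by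
    rw [abs_mul, abs_mul]
    rcases le_or_gt |E' j - e| h with near | far
    · calc |c j| * |F j| ≤ 1 * Z := mul_le_mul (hc j) (hnear j near) (abs_nonneg _) zero_le_one
        _ ≤ Z + |E' j - e| * |c j| * |F j| / h :=
            (one_mul Z).trans_le (le_add_of_nonneg_right (by positivity))
    · calc |c j| * |F j| = h * |c j| * |F j| / h := by field_simp
        _ ≤ |E' j - e| * |c j| * |F j| / h := by gcongr
        _ ≤ Z + |E' j - e| * |c j| * |F j| / h := le_add_of_nonneg_left hZ
  rw [← hψ.sum_mul_of_le hN.le, ← hb.sum_mul_sum]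
  calc |∑ j, c j * F j| ≤ ∑ j, (Z + |(E' j - e) * c j| * |F j| / h) :=
        (Finset.abs_sum_le_sum_abs _ _).trans (Finset.sum_le_sum fun j _ => term j)
    _ = (2 * N' + 1) * Z + (∑ j, |(E' j - e) * c j| * |F j|) / h := by
        rw [Finset.sum_add_distrib, ← Finset.sum_div, Finset.sum_const, Finset.card_fin,
          nsmul_eq_mul]
        push_cast
        ring
    _ ≤ (2 * N' + 1) * Z + 2 * δ * R / h := by
        gcongr
        exact hb.sum_abs_energy_sub_mul_le hψ hN hδ hR hf

end IsBoxEigenbasis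

/-- A box eigenvector that is bounded by `δ` at the two edges of the box and is, up to sign, the
only one with energy closer to `e` than `g`. -/
structure IsLocalizedEigenvector (U : ℤ → ℝ) (N : ℕ) (δ g e : ℝ) (ψ : ℤ → ℝ) : Prop
    extends IsBoxEigenvector U N e ψ where
  abs_edge_le : ∀ σ : ℤˣ, |ψ (σ * N)| ≤ δ
  eq_or_eq_neg_of_abs_lt : ∀ E χ, IsBoxEigenvector U N E χ → |E - e| < g → χ = ψ ∨ χ = -ψ

lemma IsLocalizedEigenvector.sum_sq_sub_smul_le {U : ℤ → ℝ} {N : ℕ} {δ g e E κ : ℝ}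
    {ψ f : ℤ → ℝ} (hψ : IsLocalizedEigenvector U N δ g e ψ) (hN : 0 < N) (hg : 0 < g)
    (hf : ∀ n ∈ latticeBox N, schrodinger U f n = E * f n) (hE : |E - e| ≤ g / 2)
    (hright : |f (N + 1)| ≤ κ) (hleft : |f (-N - 1)| ≤ κ) :
    ∑ n ∈ latticeBox N, (f n - (∑ k ∈ latticeBox N, ψ k * f k) * ψ n) ^ 2
      ≤ 8 * κ ^ 2 / g ^ 2 := by
  set c := ∑ k ∈ latticeBox N, ψ k * f k with hc
  obtain ⟨ε, η, hη⟩ := exists_isBoxEigenbasis U N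
  have coeff (i) : (∑ n ∈ latticeBox N, η i n * (f n - c * ψ n)) ^ 2
      ≤ 4 / g ^ 2 * ((E - ε i) * ∑ n ∈ latticeBox N, η i n * f n) ^ 2 := by
    have expand : ∑ n ∈ latticeBox N, η i n * (f n - c * ψ n)
        = ∑ n ∈ latticeBox N, η i n * f n - c * ∑ n ∈ latticeBox N, η i n * ψ n := by
      rw [Finset.mul_sum, ← Finset.sum_sub_distrib]
      exact Finset.sum_congr rfl fun n _ => by ring
    rw [expand]
    rcases lt_or_ge |ε i - e| g with near | far
    · have vanish : ∑ n ∈ latticeBox N, η i n * f n - c * ∑ n ∈ latticeBox N, η i n * ψ n = 0 := by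
        rcases hψ.eq_or_eq_neg_of_abs_lt _ _ (hη.isBoxEigenvector i) near with h | h <;>
          simp [h, ← hc, ← sq, hψ.sum_sq]
      rw [vanish, zero_pow two_ne_zero]
      positivity
    · have hne : ε i ≠ e := fun h => by rw [h, sub_self, abs_zero] at far; linarith
      have hdist : g / 2 ≤ |E - ε i| := by
        have := abs_sub_le (ε i) E e
        rw [abs_sub_comm (ε i) E] at this
        linarith
      rw [(hη.isBoxEigenvector i).sum_mul_eq_zero hψ.toIsBoxEigenvector hne, mul_zero, sub_zero,
        mul_pow, ← mul_assoc, ← sq_abs (E - ε i)]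
      refine le_mul_of_one_le_left (sq_nonneg _) ?_
      calc 1 = 4 / g ^ 2 * (g / 2) ^ 2 := by field_simp; norm_num
        _ ≤ 4 / g ^ 2 * |E - ε i| ^ 2 := by gcongr
  rw [← hη.sum_sq_coeff]
  refine (Finset.sum_le_sum fun i _ => coeff i).trans ?_
  rw [← Finset.mul_sum, hη.sum_energy_sub_sq_mul_of_solution hN hf]
  calc 4 / g ^ 2 * (f (N + 1) ^ 2 + f (-N - 1) ^ 2) ≤ 4 / g ^ 2 * (κ ^ 2 + κ ^ 2) := by
        gcongr 4 / g ^ 2 * (?_ + ?_)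
        exacts [sq_le_sq' (abs_le.1 hright).1 (abs_le.1 hright).2,
          sq_le_sq' (abs_le.1 hleft).1 (abs_le.1 hleft).2]
    _ = 8 * κ ^ 2 / g ^ 2 := by ring

lemma IsBoxEigenvector.sum_sq_sub_le {U U' : ℤ → ℝ} {N N' : ℕ} {e E a b : ℝ} {ψ χ : ℤ → ℝ}
    (hψ : IsBoxEigenvector U N e ψ) (hχ : IsBoxEigenvector U' N' E χ) (hN : N ≤ N')
    (hsign : 0 ≤ ∑ n ∈ latticeBox N, ψ n * χ n)
    (hinner : ∑ n ∈ latticeBox N, (χ n - (∑ k ∈ latticeBox N, ψ k * χ k) * ψ n) ^ 2 ≤ a)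
    (hshell : ∑ n ∈ latticeBox N' \ latticeBox N, χ n ^ 2 ≤ b) :
    ∑ n ∈ latticeBox N', (χ n - ψ n) ^ 2 ≤ 2 * (a + b) := by
  set c := ∑ n ∈ latticeBox N, ψ n * χ n with hc
  have expand (s : Finset ℤ) (t : ℝ) : ∑ n ∈ s, (χ n - t * ψ n) ^ 2
      = ∑ n ∈ s, χ n ^ 2 - 2 * t * ∑ n ∈ s, ψ n * χ n + t ^ 2 * ∑ n ∈ s, ψ n ^ 2 := by
    rw [Finset.mul_sum, Finset.mul_sum, ← Finset.sum_sub_distrib, ← Finset.sum_add_distrib]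
    exact Finset.sum_congr rfl fun n _ => by ring
  have distance : ∑ n ∈ latticeBox N', (χ n - ψ n) ^ 2 = 2 - 2 * c := by
    have := expand (latticeBox N') 1
    rw [hχ.sum_sq, hψ.sum_sq_of_le hN, hψ.sum_mul_of_le hN, ← hc] at this
    simp only [one_mul] at this
    linarith
  have residual : ∑ n ∈ latticeBox N, χ n ^ 2 - c ^ 2 ≤ a := by
    rw [expand, hψ.sum_sq, ← hc] at hinner
    linarith
  have hc_le : c ≤ 1 := by
    have : 0 ≤ ∑ n ∈ latticeBox N', (χ n - ψ n) ^ 2 := Finset.sum_nonneg fun _ _ => sq_nonneg _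
    linarith
  have split := Finset.sum_sdiff (f := fun n => χ n ^ 2) (latticeBox_mono hN)
  rw [hχ.sum_sq] at split
  linarith [pow_le_of_le_one hsign hc_le two_ne_zero]

/-- Nonresonance of the potential `U'` on `[-N', N']` with the potential `U` on the smaller box
`[-N, N]`. Writing "shell" for the difference of the boxes, eigenvectors of the large box with
energy `2 * h`-close to an energy of the small box are bounded by `κ₁` on the shell, and
eigenvectors reaching size `κ₂` on the small box are bounded by `δ` at the edges of the large
one. -/
structure IsNonresonant (U U' : ℤ → ℝ) (N N' : ℕ) (h κ₁ κ₂ δ : ℝ) : Prop where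
  eq_on_box : ∀ n ∈ latticeBox N, U' n = U n
  abs_shell_le : ∀ e ψ E φ, IsBoxEigenvector U N e ψ → IsBoxEigenvector U' N' E φ →
    |E - e| ≤ 2 * h → ∀ q ∈ latticeBox N' \ latticeBox N, |φ q| ≤ κ₁
  abs_edge_le : ∀ E φ, IsBoxEigenvector U' N' E φ → ∀ n ∈ latticeBox N, κ₂ ≤ |φ n| →
    ∀ σ : ℤˣ, |φ (σ * N')| ≤ δ

namespace IsNonresonant

variable {U U' : ℤ → ℝ} {N N' : ℕ} {h κ₁ κ₂ δ δ' g g' M e E : ℝ} {ψ φ : ℤ → ℝ}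

lemma sum_sq_shell_le (H : IsNonresonant U U' N N' h κ₁ κ₂ δ) (hψ : IsBoxEigenvector U N e ψ)
    (hφ : IsBoxEigenvector U' N' E φ) (hE : |E - e| ≤ 2 * h) :
    ∑ n ∈ latticeBox N' \ latticeBox N, φ n ^ 2 ≤ (2 * N' + 1) * κ₁ ^ 2 :=
  sum_sq_latticeBox_le Finset.sdiff_subset (H.abs_shell_le e ψ E φ hψ hφ hE)

lemma isLocalizedEigenvector (H : IsNonresonant U U' N N' h κ₁ κ₂ δ) (hU' : ∀ n, |U' n| ≤ M)
    (hN : N ≤ N') (hκ₁ : (2 * N' + 1) * κ₁ ^ 2 ≤ 1 / 4) (hκ₂ : 0 ≤ κ₂)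
    (hκ₂' : (2 * N + 1) * κ₂ ^ 2 ≤ 3 / 4) (hg : g ≤ h)
    (hg' : g * ((2 * M + 4) ^ (2 * N) * (2 * N + 1)) ≤ 1) (hψ : IsBoxEigenvector U N e ψ)
    (hφ : IsBoxEigenvector U' N' E φ) (hE : |E - e| ≤ h) :
    IsLocalizedEigenvector U' N' δ g E φ := by
  have hM : 0 ≤ M := (abs_nonneg _).trans (hU' 0)
  have hh : 0 ≤ h := (abs_nonneg _).trans hE
  have shell := (H.sum_sq_shell_le hψ hφ (by linarith)).trans hκ₁
  refine ⟨hφ, ?_, fun E' χ hχ hE' => ?_⟩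
  · have inner : (2 * N + 1) * κ₂ ^ 2 ≤ ∑ n ∈ latticeBox N, φ n ^ 2 := by
      have := Finset.sum_sdiff (f := fun n => φ n ^ 2) (latticeBox_mono hN)
      linarith [hφ.sum_sq]
    obtain ⟨n, hn, hn'⟩ := exists_sq_ge_of_le_sum_sq inner
    exact H.abs_edge_le E φ hφ n hn (by rw [← abs_of_nonneg hκ₂]; exact sq_le_sq.1 hn')
  · rcases eq_or_ne E' E with rfl | hne
    · exact hφ.eq_or_eq_neg hχ hU'
    · have hE'e : |E' - e| ≤ 2 * h := by linarith [abs_sub_le E' E e]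
      have separation := hχ.one_le_abs_energy_sub_mul hφ hU' hN hne
        ((H.sum_sq_shell_le hψ hχ hE'e).trans hκ₁) shell
      exact absurd (separation.trans_lt (mul_lt_mul_of_pos_right hE' (by positivity)))
        hg'.not_gt

lemma exists_isLocalizedEigenvector (H : IsNonresonant U U' N N' h κ₁ κ₂ δ')
    (hU' : ∀ n, |U' n| ≤ M) (hN₀ : 0 < N) (hN : N < N')
    (hκ₁ : (2 * N' + 1) * κ₁ ^ 2 ≤ 1 / 4) (hκ₂ : 0 ≤ κ₂)
    (hκ₂' : (2 * N + 1) * κ₂ ^ 2 ≤ 3 / 4) (hg' : g' ≤ h)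
    (hg'' : g' * ((2 * M + 4) ^ (2 * N) * (2 * N + 1)) ≤ 1) (hh : 0 < h)
    (hδ : 2 * δ ^ 2 < h ^ 2) (hg : h ≤ g / 2) (hψ : IsLocalizedEigenvector U N δ g e ψ) :
    ∃ E φ, IsLocalizedEigenvector U' N' δ' g' E φ ∧ |E - e| ≤ h ∧
      ∑ n ∈ latticeBox N', (φ n - ψ n) ^ 2
        ≤ 2 * (8 * κ₁ ^ 2 / g ^ 2 + (2 * N' + 1) * κ₁ ^ 2) := by
  have hψ' := hψ.toIsBoxEigenvector
  obtain ⟨E', φ', hb⟩ := exists_isBoxEigenbasis U' N'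
  obtain ⟨j, hj⟩ := hb.exists_abs_energy_sub_le (hψ'.congr H.eq_on_box) hN hψ.abs_edge_le hh.le hδ
  obtain ⟨χ, hχ, hsign⟩ : ∃ χ, IsBoxEigenvector U' N' (E' j) χ ∧
      0 ≤ ∑ n ∈ latticeBox N, ψ n * χ n := by
    rcases le_total 0 (∑ n ∈ latticeBox N, ψ n * φ' j n) with h | h
    · exact ⟨_, hb.isBoxEigenvector j, h⟩
    · exact ⟨_, (hb.isBoxEigenvector j).neg, by simpa using h⟩
  have hj₂ : |E' j - e| ≤ 2 * h := by linarith
  have hshell := H.abs_shell_le e ψ _ χ hψ' hχ hj₂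
  have hsolution : ∀ n ∈ latticeBox N, schrodinger U χ n = E' j * χ n := fun n hn => by
    rw [← hχ.schrodinger_eq n (latticeBox_mono hN.le hn), schrodinger, schrodinger,
      H.eq_on_box n hn]
  refine ⟨E' j, χ, H.isLocalizedEigenvector hU' hN.le hκ₁ hκ₂ hκ₂' hg' hg'' hψ' hχ hj, hj,
    hψ'.sum_sq_sub_le hχ hN.le hsign (hψ.sum_sq_sub_smul_le hN₀ (by linarith) hsolution
      (hj.trans hg) (hshell _ ?_) (hshell _ ?_)) (H.sum_sq_shell_le hψ' hχ hj₂)⟩ <;>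
    (simp only [Finset.mem_sdiff, Finset.mem_Icc]; omega)

end IsNonresonant

/-! ### The projective transfer operator -/

/-- The uniform probability measure on `[-ε, ε]`, the law of a single random potential value. -/
abbrev uniformInterval (ε : ℝ) : Measure ℝ := ProbabilityTheory.cond volume (Set.Icc (-ε) ε)

lemma uniformInterval_eq (ε : ℝ) :
    uniformInterval ε = (ENNReal.ofReal (2 * ε))⁻¹ • volume.restrict (Set.Icc (-ε) ε) := by
  rw [uniformInterval, ProbabilityTheory.cond, Real.volume_Icc, sub_neg_eq_add, two_mul]

lemma uniformInterval_le (ε : ℝ) :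
    uniformInterval ε ≤ (ENNReal.ofReal (2 * ε))⁻¹ • volume := by
  rw [uniformInterval_eq]
  exact smul_mono_right _ Measure.restrict_le_self

lemma isProbabilityMeasure_uniformInterval {ε : ℝ} (hε : 0 < ε) :
    IsProbabilityMeasure (uniformInterval ε) :=
  ProbabilityTheory.cond_isProbabilityMeasure_of_finite (by simpa using hε) (by simp)

lemma ae_uniformInterval_ne (ε y : ℝ) : ∀ᵐ v ∂uniformInterval ε, v ≠ y :=
  ProbabilityTheory.cond_absolutelyContinuous.ae_le (Measure.ae_ne volume y)

lemma lintegral_uniformInterval_ofReal {ε : ℝ} (hε : 0 < ε) {g : ℝ → ℝ} (hg : Continuous g)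
    (hg0 : ∀ v, 0 ≤ g v) :
    ∫⁻ v, ENNReal.ofReal (g v) ∂uniformInterval ε
      = ENNReal.ofReal ((∫ v in -ε..ε, g v) / (2 * ε)) := by
  rw [uniformInterval_eq, lintegral_smul_measure,
    ← ofReal_integral_eq_lintegral_ofReal hg.integrableOn_Icc (Filter.Eventually.of_forall hg0),
    intervalIntegral.integral_of_le (by linarith), integral_Icc_eq_integral_Ioc,
    ← ENNReal.ofReal_inv_of_pos (by positivity), smul_eq_mul,
    ← ENNReal.ofReal_mul (by positivity), mul_comm, div_eq_mul_inv]

lemma sq_lintegral_mul_le {α : Type*} [MeasurableSpace α] {μ : Measure α} {f g : α → ℝ≥0∞}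
    (hf : AEMeasurable f μ) (hg : AEMeasurable g μ) :
    (∫⁻ x, f x * g x ∂μ) ^ 2 ≤ (∫⁻ x, f x ^ 2 ∂μ) * ∫⁻ x, g x ^ 2 ∂μ := by
  have hHolder := ENNReal.lintegral_mul_le_Lp_mul_Lq μ (p := 2) (q := 2)
    (by constructor <;> norm_num) hf hg
  simp only [Pi.mul_apply, ENNReal.rpow_two] at hHolder
  calc (∫⁻ x, f x * g x ∂μ) ^ 2
      ≤ ((∫⁻ x, f x ^ 2 ∂μ) ^ (1 / 2 : ℝ) * (∫⁻ x, g x ^ 2 ∂μ) ^ (1 / 2 : ℝ)) ^ 2 := by gcongr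
    _ = (∫⁻ x, f x ^ 2 ∂μ) * ∫⁻ x, g x ^ 2 ∂μ := by
      rw [mul_pow, ← ENNReal.rpow_natCast, ← ENNReal.rpow_natCast, ← ENNReal.rpow_mul,
        ← ENNReal.rpow_mul]
      norm_num

/-- The average of `f` over the interval of radius `ε` about `y`. -/
def smoothing (ε : ℝ) (f : ℝ → ℝ≥0∞) (y : ℝ) : ℝ≥0∞ := ∫⁻ v, f (y - v) ∂uniformInterval ε

lemma measurable_smoothing {ε : ℝ} {f : ℝ → ℝ≥0∞} (hf : Measurable f) :
    Measurable (smoothing ε f) :=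
  Measurable.lintegral_prod_right' (f := fun p : ℝ × ℝ => f (p.1 - p.2)) (by fun_prop)

lemma sq_smoothing_le {ε : ℝ} (hε : 0 < ε) {f : ℝ → ℝ≥0∞} (hf : Measurable f) (y : ℝ) :
    smoothing ε f y ^ 2 ≤ smoothing ε (fun x => f x ^ 2) y := by
  have := isProbabilityMeasure_uniformInterval hε
  simpa [smoothing] using sq_lintegral_mul_le (μ := uniformInterval ε)
    (f := fun v => f (y - v)) (g := fun _ => 1) (by fun_prop) (by fun_prop)

lemma smoothing_le (ε : ℝ) (f : ℝ → ℝ≥0∞) (y : ℝ) :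
    smoothing ε f y ≤ (ENNReal.ofReal (2 * ε))⁻¹ * ∫⁻ x, f x := by
  calc smoothing ε f y ≤ ∫⁻ v, f (y - v) ∂((ENNReal.ofReal (2 * ε))⁻¹ • volume) :=
        lintegral_mono' (uniformInterval_le ε) le_rfl
    _ = (ENNReal.ofReal (2 * ε))⁻¹ * ∫⁻ x, f x := by
        rw [lintegral_smul_measure, lintegral_sub_left_eq_self f y, smul_eq_mul]

lemma lintegral_smoothing_mul {ε : ℝ} {f g : ℝ → ℝ≥0∞} (hf : Measurable f) (hg : Measurable g) :
    ∫⁻ y, smoothing ε f y * g y = ∫⁻ x, f x * ∫⁻ v, g (x + v) ∂uniformInterval ε := by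
  calc ∫⁻ y, smoothing ε f y * g y
      = ∫⁻ y, ∫⁻ v, f (y - v) * g y ∂uniformInterval ε := by
        refine lintegral_congr fun y => ?_
        rw [lintegral_mul_const _ (by fun_prop), smoothing]
    _ = ∫⁻ v, ∫⁻ y, f (y - v) * g y ∂volume ∂uniformInterval ε :=
        lintegral_lintegral_swap (by fun_prop)
    _ = ∫⁻ v, ∫⁻ x, f x * g (x + v) ∂volume ∂uniformInterval ε := by
        refine lintegral_congr fun v => ?_
        rw [← lintegral_add_right_eq_self _ v]
        simp only [add_sub_cancel_right]
    _ = ∫⁻ x, ∫⁻ v, f x * g (x + v) ∂uniformInterval ε :=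
        lintegral_lintegral_swap (by fun_prop)
    _ = ∫⁻ x, f x * ∫⁻ v, g (x + v) ∂uniformInterval ε :=
        lintegral_congr fun x => lintegral_const_mul _ (by fun_prop)

lemma lintegral_sq_smoothing_le {ε : ℝ} (hε : 0 < ε) {f : ℝ → ℝ≥0∞} (hf : Measurable f) :
    ∫⁻ y, smoothing ε f y ^ 2 ≤ ∫⁻ x, f x ^ 2 := by
  have := isProbabilityMeasure_uniformInterval hε
  refine (lintegral_mono fun y => sq_smoothing_le hε hf y).trans (le_of_eq ?_)
  simpa using lintegral_smoothing_mul (ε := ε) (f := fun x => f x ^ 2) (g := fun _ => 1)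
    (by fun_prop) (by fun_prop)

/-- One step of the projective transfer operator. It describes how the inverse norm of the image
of `(x, 1)` under a transfer matrix of energy `b - v` evolves, `v` being uniform on `[-ε, ε]`: the
matrix maps `(x, 1)` to `x • (b - v - x⁻¹, 1)`. -/
def transferStep (ε b : ℝ) (f : ℝ → ℝ≥0∞) (x : ℝ) : ℝ≥0∞ :=
  ENNReal.ofReal |x|⁻¹ * smoothing ε f (b - x⁻¹)

lemma measurable_transferStep {ε b : ℝ} {f : ℝ → ℝ≥0∞} (hf : Measurable f) :
    Measurable (transferStep ε b f) := by
  have := measurable_smoothing (ε := ε) hf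
  unfold transferStep
  fun_prop

lemma transferStep_congr {ε b : ℝ} {f g : ℝ → ℝ≥0∞} (h : ∀ x ≠ 0, f x = g x) :
    transferStep ε b f = transferStep ε b g := by
  ext x
  refine congrArg (ENNReal.ofReal |x|⁻¹ * ·) (lintegral_congr_ae ?_)
  filter_upwards [ae_uniformInterval_ne ε (b - x⁻¹)] with v hv
  exact h _ (sub_ne_zero.2 hv.symm)

lemma setLIntegral_sq_transferStep {ε b : ℝ} {f : ℝ → ℝ≥0∞} {s : Set ℝ}
    (hs : MeasurableSet s) (h0 : (0 : ℝ) ∉ s) :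
    ∫⁻ x in s, transferStep ε b f x ^ 2
      = ∫⁻ y in (fun x => b - x⁻¹) '' s, smoothing ε f y ^ 2 := by
  have hderiv : ∀ x ∈ s, HasDerivWithinAt (fun x => b - x⁻¹) (x ^ 2)⁻¹ s x := fun x hx => by
    simpa using ((hasDerivAt_inv (ne_of_mem_of_not_mem hx h0)).const_sub b).hasDerivWithinAt
  have hinj : Set.InjOn (fun x => b - x⁻¹) s := fun x _ y _ hxy => by simpa using hxy
  rw [lintegral_image_eq_lintegral_abs_deriv_mul hs hderiv hinj]
  refine lintegral_congr fun x => ?_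
  rw [transferStep, mul_pow, ← ENNReal.ofReal_pow (by positivity), inv_pow, sq_abs,
    abs_of_nonneg (a := (x ^ 2)⁻¹) (by positivity)]

lemma lintegral_sq_transferStep_le (ε b : ℝ) (f : ℝ → ℝ≥0∞) :
    ∫⁻ x, transferStep ε b f x ^ 2 ≤ ∫⁻ y, smoothing ε f y ^ 2 := by
  calc ∫⁻ x, transferStep ε b f x ^ 2 = ∫⁻ x in {0}ᶜ, transferStep ε b f x ^ 2 := by
        rw [restrict_compl_singleton]
    _ = ∫⁻ y in (fun x => b - x⁻¹) '' {0}ᶜ, smoothing ε f y ^ 2 :=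
        setLIntegral_sq_transferStep (measurableSet_singleton 0).compl (by simp)
    _ ≤ ∫⁻ y, smoothing ε f y ^ 2 := setLIntegral_le_lintegral _ _

lemma setLIntegral_sq_transferStep_tail_le {ε b X : ℝ} (hε : 0 < ε) (hX : 0 < X) {f : ℝ → ℝ≥0∞}
    (hf : Measurable f) :
    ∫⁻ x in {x | X < |x|}, transferStep ε b f x ^ 2
      ≤ ENNReal.ofReal (1 / (ε * X)) * ∫⁻ x, f x ^ 2 := by
  have htail : MeasurableSet {x : ℝ | X < |x|} := measurableSet_lt measurable_const (by fun_prop)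
  have himage : (fun x : ℝ => b - x⁻¹) '' {x | X < |x|} ⊆ Set.Icc (b - X⁻¹) (b + X⁻¹) := by
    rintro _ ⟨x, hx, rfl⟩
    have hinv : |x⁻¹| ≤ X⁻¹ := by
      rw [abs_inv]
      exact inv_anti₀ hX (le_of_lt hx)
    have := abs_le.1 hinv
    constructor <;> linarith
  calc ∫⁻ x in {x | X < |x|}, transferStep ε b f x ^ 2
      = ∫⁻ y in (fun x : ℝ => b - x⁻¹) '' {x | X < |x|}, smoothing ε f y ^ 2 :=
        setLIntegral_sq_transferStep htail (by simpa using hX.le)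
    _ ≤ ∫⁻ y in Set.Icc (b - X⁻¹) (b + X⁻¹), smoothing ε f y ^ 2 :=
        lintegral_mono_set himage
    _ ≤ ∫⁻ y in Set.Icc (b - X⁻¹) (b + X⁻¹), (ENNReal.ofReal (2 * ε))⁻¹ * ∫⁻ x, f x ^ 2 :=
        lintegral_mono fun y => (sq_smoothing_le hε hf y).trans (smoothing_le _ _ _)
    _ = ENNReal.ofReal (1 / (ε * X)) * ∫⁻ x, f x ^ 2 := by
        rw [setLIntegral_const, Real.volume_Icc, mul_right_comm,
          ← ENNReal.ofReal_inv_of_pos (by positivity), ← ENNReal.ofReal_mul (by positivity)]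
        congr 2
        field_simp
        ring

lemma sq_sinc_le {θ : ℝ} (h0 : 0 < θ) (h1 : θ ≤ 1) : Real.sinc θ ^ 2 ≤ 1 - θ ^ 2 / 10 := by
  have hnonneg : 0 ≤ Real.sin θ :=
    Real.sin_nonneg_of_nonneg_of_le_pi h0.le (by linarith [Real.pi_gt_three])
  have hupper : Real.sin θ ≤ θ * (1 - θ ^ 2 / 10) := by
    have hbound := (abs_le.1 (Real.sin_bound (abs_le.2 ⟨by linarith, h1⟩))).2
    rw [abs_of_pos h0] at hbound
    have : θ ^ 4 ≤ θ ^ 3 := pow_le_pow_of_le_one h0.le h1 (by norm_num)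
    nlinarith [pow_pos h0 3]
  have hsq : (1 - θ ^ 2 / 10) ^ 2 ≤ 1 - θ ^ 2 / 10 := by nlinarith [sq_nonneg θ]
  refine le_trans ?_ hsq
  rw [Real.sinc_of_ne_zero h0.ne']
  exact pow_le_pow_left₀ (div_nonneg hnonneg h0.le)
    ((div_le_iff₀ h0).2 (hupper.trans_eq (mul_comm _ _))) 2

lemma integral_cos_add_div {ε X : ℝ} (hε : ε ≠ 0) (hX : X ≠ 0) (x : ℝ) :
    ∫ v in -ε..ε, Real.cos ((x + v) / X) = 2 * ε * Real.sinc (ε / X) * Real.cos (x / X) := by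
  simp only [add_div]
  rw [intervalIntegral.integral_comp_add_div Real.cos hX, integral_cos, neg_div, Real.sin_add,
    Real.sin_add, Real.sin_neg, Real.cos_neg, smul_eq_mul,
    Real.sinc_of_ne_zero (div_ne_zero hε hX)]
  field_simp
  ring

lemma lintegral_uniformInterval_cos {ε X t : ℝ} (hε : 0 < ε) (hX : X ≠ 0) (ht : |t| ≤ 1) (x : ℝ) :
    ∫⁻ v, ENNReal.ofReal (2 + t * Real.cos ((x + v) / X)) ∂uniformInterval ε
      = ENNReal.ofReal (2 + t * Real.sinc (ε / X) * Real.cos (x / X)) := by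
  have hnonneg : ∀ v, 0 ≤ 2 + t * Real.cos ((x + v) / X) := fun v => by
    have : |t * Real.cos ((x + v) / X)| ≤ 1 := by
      rw [abs_mul]
      exact mul_le_one₀ ht (abs_nonneg _) (Real.abs_cos_le_one _)
    linarith [(abs_le.1 this).1]
  rw [lintegral_uniformInterval_ofReal hε (by fun_prop) hnonneg,
    intervalIntegral.integral_add (by simp) (Continuous.intervalIntegrable (by fun_prop) _ _),
    intervalIntegral.integral_const, intervalIntegral.integral_const_mul,
    integral_cos_add_div hε.ne' hX, smul_eq_mul]
  congr 1
  field_simp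
  ring

lemma sq_smoothing_le_cosWeight {ε X : ℝ} (hε : 0 < ε) (hX : X ≠ 0) {k : ℝ → ℝ≥0∞}
    (hk : Measurable k) (y : ℝ) :
    smoothing ε k y ^ 2
      ≤ smoothing ε (fun x => k x ^ 2 * ENNReal.ofReal (2 + Real.cos (x / X))⁻¹) y
        * ENNReal.ofReal (2 + Real.sinc (ε / X) * Real.cos (y / X)) := by
  set weight : ℝ → ℝ := fun x => 2 + Real.cos (x / X)
  have hpos : ∀ x, 0 < weight x := fun x => by linarith [Real.neg_one_le_cos (x / X)]
  have : Continuous weight := by fun_prop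
  have hsplit : ∀ x, k x * ENNReal.ofReal (√(weight x))⁻¹ * ENNReal.ofReal √(weight x) = k x :=
    fun x => by
      rw [mul_assoc, ← ENNReal.ofReal_mul (by positivity),
        inv_mul_cancel₀ (Real.sqrt_pos.2 (hpos x)).ne', ENNReal.ofReal_one, mul_one]
  have hleft : ∀ x, (k x * ENNReal.ofReal (√(weight x))⁻¹) ^ 2
      = k x ^ 2 * ENNReal.ofReal (weight x)⁻¹ := fun x => by
    rw [mul_pow, ← ENNReal.ofReal_pow (by positivity), inv_pow, Real.sq_sqrt (hpos x).le]
  have hright : ∫⁻ v, ENNReal.ofReal √(weight (y - v)) ^ 2 ∂uniformInterval ε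
      = ENNReal.ofReal (2 + Real.sinc (ε / X) * Real.cos (y / X)) := by
    have hmean := lintegral_uniformInterval_cos (t := 1) hε hX (by simp) (-y)
    rw [one_mul, neg_div, Real.cos_neg] at hmean
    rw [← hmean]
    refine lintegral_congr fun v => ?_
    rw [← ENNReal.ofReal_pow (by positivity), Real.sq_sqrt (hpos _).le, one_mul,
      ← Real.cos_neg ((-y + v) / X), ← neg_div, neg_add, neg_neg, ← sub_eq_add_neg]
  have hCauchy := sq_lintegral_mul_le (μ := uniformInterval ε)
    (f := fun v => k (y - v) * ENNReal.ofReal (√(weight (y - v)))⁻¹)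
    (g := fun v => ENNReal.ofReal √(weight (y - v))) (by fun_prop) (by fun_prop)
  simp only [hsplit, hleft, hright] at hCauchy
  exact hCauchy

/- Averaging shrinks the oscillation of `cos (x / X)` by the factor `sinc (ε / X)`, so the weighted
Cauchy–Schwarz inequality gains wherever the cosine is positive. -/
lemma lintegral_sq_smoothing_le_cosWeight {ε X : ℝ} (hε : 0 < ε) (hX : X ≠ 0) {k : ℝ → ℝ≥0∞}
    (hk : Measurable k) :
    ∫⁻ y, smoothing ε k y ^ 2 ≤ ∫⁻ x, k x ^ 2 * ENNReal.ofReal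
      ((2 + Real.sinc (ε / X) ^ 2 * Real.cos (x / X)) / (2 + Real.cos (x / X))) := by
  refine (lintegral_mono (sq_smoothing_le_cosWeight hε hX hk)).trans (le_of_eq ?_)
  rw [lintegral_smoothing_mul (by fun_prop) (by fun_prop)]
  refine lintegral_congr fun x => ?_
  have hpos : 0 ≤ 2 + Real.cos (x / X) := by linarith [Real.neg_one_le_cos (x / X)]
  rw [lintegral_uniformInterval_cos hε hX (Real.abs_sinc_le_one _), mul_assoc,
    ← ENNReal.ofReal_mul (inv_nonneg.2 hpos), inv_mul_eq_div, sq (Real.sinc _)]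

lemma cosWeight_le {r c : ℝ} (hr : r ≤ 1) (hc : -1 ≤ c) :
    (2 + r * c) / (2 + c) ≤ 1 + (1 - r) := by
  rw [div_le_iff₀ (by linarith)]
  nlinarith [mul_nonneg (sub_nonneg.2 hr) (by linarith : 0 ≤ 1 + c)]

lemma cosWeight_le_of_half_le {r c : ℝ} (hr : r ≤ 1) (hc : 1 / 2 ≤ c) :
    (2 + r * c) / (2 + c) ≤ 1 - (1 - r) / 5 := by
  rw [div_le_iff₀ (by linarith)]
  nlinarith [mul_nonneg (sub_nonneg.2 hr) (by linarith : 0 ≤ c - 1 / 2)]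

lemma half_le_cos {t : ℝ} (ht : |t| ≤ 1) : 1 / 2 ≤ Real.cos t := by
  linarith [Real.one_sub_sq_div_two_le_cos (x := t), (sq_le_one_iff_abs_le_one t).2 ht]

lemma lintegral_sq_smoothing_le_tail {ε X : ℝ} (hε : 0 < ε) (hX : 0 < X) {k : ℝ → ℝ≥0∞}
    (hk : Measurable k) :
    ∫⁻ y, smoothing ε k y ^ 2
      ≤ ENNReal.ofReal (1 - (1 - Real.sinc (ε / X) ^ 2) / 5) * (∫⁻ x, k x ^ 2)
        + ENNReal.ofReal (6 / 5 * (1 - Real.sinc (ε / X) ^ 2))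
          * ∫⁻ x in {x | X < |x|}, k x ^ 2 := by
  set r := Real.sinc (ε / X) ^ 2
  have hr : r ≤ 1 := (sq_le_one_iff_abs_le_one _).2 (Real.abs_sinc_le_one _)
  have hr0 : 0 ≤ r := sq_nonneg _
  have htail : MeasurableSet {x : ℝ | X < |x|} := measurableSet_lt measurable_const (by fun_prop)
  have hk2 : Measurable fun x => k x ^ 2 := by fun_prop
  have hpointwise : ∀ x, k x ^ 2 * ENNReal.ofReal
      ((2 + r * Real.cos (x / X)) / (2 + Real.cos (x / X)))
        ≤ ENNReal.ofReal (1 - (1 - r) / 5) * k x ^ 2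
          + ENNReal.ofReal (6 / 5 * (1 - r)) * {x | X < |x|}.indicator (fun x => k x ^ 2) x := by
    intro x
    by_cases hx : X < |x|
    · rw [Set.indicator_of_mem (by exact hx), ← add_mul,
        ← ENNReal.ofReal_add (by linarith) (by linarith), mul_comm]
      gcongr
      linarith [cosWeight_le hr (Real.neg_one_le_cos (x / X))]
    · rw [Set.indicator_of_notMem (by exact hx), mul_zero, add_zero, mul_comm]
      gcongr
      refine cosWeight_le_of_half_le hr (half_le_cos ?_)
      rw [abs_div, abs_of_pos hX, div_le_one hX]
      exact not_lt.1 hx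
  refine (lintegral_sq_smoothing_le_cosWeight hε hX.ne' hk).trans
    ((lintegral_mono hpointwise).trans_eq ?_)
  rw [lintegral_add_left (by fun_prop), lintegral_const_mul _ hk2,
    lintegral_const_mul _ (hk2.indicator htail), lintegral_indicator htail]

/- One application of `transferStep` leaves little mass outside `[-12 / ε, 12 / ε]`, whence the
second one contracts. -/
lemma lintegral_sq_transferStep_transferStep_le {ε : ℝ} (hε : 0 < ε) (hε1 : ε ≤ 1) (b b' : ℝ)
    {f : ℝ → ℝ≥0∞} (hf : Measurable f) :
    ∫⁻ x, transferStep ε b' (transferStep ε b f) x ^ 2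
      ≤ ENNReal.ofReal (1 - ε ^ 4 / 14400) * ∫⁻ x, f x ^ 2 := by
  set X := 12 / ε with hX
  have hX0 : 0 < X := by positivity
  have hεX : ε / X = ε ^ 2 / 12 := by rw [hX]; field_simp
  have hεX' : 1 / (ε * X) = 1 / 12 := by rw [hX]; field_simp
  have hsinc := sq_sinc_le (θ := ε / X) (by positivity) (by rw [hεX]; nlinarith)
  set r := Real.sinc (ε / X) ^ 2
  have hr0 : 0 ≤ r := sq_nonneg _
  have hr : r ≤ 1 := by nlinarith [sq_nonneg (ε / X)]
  set k := transferStep ε b f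
  have hmass : ∫⁻ x, k x ^ 2 ≤ ∫⁻ x, f x ^ 2 :=
    (lintegral_sq_transferStep_le ε b f).trans (lintegral_sq_smoothing_le hε hf)
  have htail : ∫⁻ x in {x | X < |x|}, k x ^ 2 ≤ ENNReal.ofReal (1 / 12) * ∫⁻ x, f x ^ 2 := by
    simpa only [hεX'] using setLIntegral_sq_transferStep_tail_le (b := b) hε hX0 hf
  calc ∫⁻ x, transferStep ε b' k x ^ 2 ≤ ∫⁻ y, smoothing ε k y ^ 2 :=
        lintegral_sq_transferStep_le _ _ _
    _ ≤ ENNReal.ofReal (1 - (1 - r) / 5) * (∫⁻ x, k x ^ 2)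
        + ENNReal.ofReal (6 / 5 * (1 - r)) * ∫⁻ x in {x | X < |x|}, k x ^ 2 :=
        lintegral_sq_smoothing_le_tail hε hX0 (measurable_transferStep hf)
    _ ≤ ENNReal.ofReal (1 - (1 - r) / 5) * (∫⁻ x, f x ^ 2)
        + ENNReal.ofReal (6 / 5 * (1 - r)) * (ENNReal.ofReal (1 / 12) * ∫⁻ x, f x ^ 2) := by
        gcongr
    _ = ENNReal.ofReal (1 - (1 - r) / 10) * ∫⁻ x, f x ^ 2 := by
        rw [← mul_assoc, ← add_mul, ← ENNReal.ofReal_mul (by linarith),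
          ← ENNReal.ofReal_add (by linarith) (by linarith)]
        congr 2
        ring
    _ ≤ ENNReal.ofReal (1 - ε ^ 4 / 14400) * ∫⁻ x, f x ^ 2 := by
        gcongr ENNReal.ofReal ?_ * _
        rw [hεX] at hsinc
        linarith

/-- The expected inverse norm of the image of `z` under a product of `n` random transfer matrices
of energies `b j - v`, with `v` uniform on `[-ε, ε]`. The matrix of index `n - 1` acts first and
the one of index `0` last. -/
def meanInvNorm (ε : ℝ) (b : ℕ → ℝ) : ℕ → ℝ × ℝ → ℝ≥0∞
  | 0, z => ‖z‖ₑ⁻¹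
  | n + 1, z => ∫⁻ v, meanInvNorm ε b n ((b n - v) * z.1 - z.2, z.1) ∂uniformInterval ε

lemma measurable_meanInvNorm (ε : ℝ) (b : ℕ → ℝ) (n : ℕ) : Measurable (meanInvNorm ε b n) := by
  induction n with
  | zero =>
    change Measurable fun z : ℝ × ℝ => ‖z‖ₑ⁻¹
    fun_prop
  | succ n ih =>
    exact Measurable.lintegral_prod_right'
      (f := fun p : (ℝ × ℝ) × ℝ => meanInvNorm ε b n ((b n - p.2) * p.1.1 - p.1.2, p.1.1))
      (ih.comp (by fun_prop))

lemma meanInvNorm_smul (ε : ℝ) (b : ℕ → ℝ) (n : ℕ) {c : ℝ} (hc : c ≠ 0) (z : ℝ × ℝ) :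
    meanInvNorm ε b n (c • z) = ENNReal.ofReal |c|⁻¹ * meanInvNorm ε b n z := by
  induction n generalizing z with
  | zero =>
    rw [meanInvNorm, meanInvNorm, enorm_smul, ENNReal.mul_inv (by simp [hc]) (by simp),
      ENNReal.ofReal_inv_of_pos (abs_pos.2 hc), ← Real.norm_eq_abs, ofReal_norm]
  | succ n ih =>
    have := measurable_meanInvNorm ε b n
    rw [meanInvNorm, meanInvNorm, ← lintegral_const_mul _ (by fun_prop)]
    refine lintegral_congr fun v => ?_
    rw [← ih]
    congr 1
    ext
    · simp only [Prod.smul_fst, Prod.smul_snd, smul_eq_mul]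
      ring
    · rfl

lemma meanInvNorm_succ_eq_transferStep (ε : ℝ) (b : ℕ → ℝ) (n : ℕ) {x : ℝ} (hx : x ≠ 0) :
    meanInvNorm ε b (n + 1) (x, 1)
      = transferStep ε (b n) (fun y => meanInvNorm ε b n (y, 1)) x := by
  have := measurable_meanInvNorm ε b n
  rw [transferStep, smoothing, meanInvNorm, ← lintegral_const_mul _ (by fun_prop)]
  refine lintegral_congr fun v => ?_
  rw [← meanInvNorm_smul _ _ _ hx, Prod.smul_mk, smul_eq_mul, smul_eq_mul, mul_one]
  congr 2
  field_simp
  ring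

lemma lintegral_sq_meanInvNorm_succ (ε : ℝ) (b : ℕ → ℝ) (n : ℕ) :
    ∫⁻ x, meanInvNorm ε b (n + 1) (x, 1) ^ 2
      = ∫⁻ x, transferStep ε (b n) (fun y => meanInvNorm ε b n (y, 1)) x ^ 2 := by
  refine lintegral_congr_ae ?_
  filter_upwards [Measure.ae_ne volume 0] with x hx
  rw [meanInvNorm_succ_eq_transferStep ε b n hx]

lemma lintegral_sq_meanInvNorm_zero_le (ε : ℝ) (b : ℕ → ℝ) :
    ∫⁻ x, meanInvNorm ε b 0 (x, 1) ^ 2 ≤ ENNReal.ofReal 8 := by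
  have hpointwise : ∀ x : ℝ,
      meanInvNorm ε b 0 (x, 1) ^ 2 ≤ ENNReal.ofReal (2 * (1 + x ^ 2)⁻¹) := by
    intro x
    have hpos : 0 < ‖((x, 1) : ℝ × ℝ)‖ := by simp
    have hfst : |x| ^ 2 ≤ ‖((x, 1) : ℝ × ℝ)‖ ^ 2 :=
      pow_le_pow_left₀ (abs_nonneg x) (norm_fst_le (x, (1 : ℝ))) 2
    have hsnd : 1 ≤ ‖((x, 1) : ℝ × ℝ)‖ ^ 2 := one_le_pow₀ (by simp)
    rw [meanInvNorm, ← ofReal_norm, ← ENNReal.ofReal_inv_of_pos hpos,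
      ← ENNReal.ofReal_pow (by positivity), inv_pow, ← div_eq_mul_inv]
    refine ENNReal.ofReal_le_ofReal ?_
    rw [inv_le_comm₀ (by positivity) (by positivity), inv_div, div_le_iff₀ two_pos]
    rw [sq_abs] at hfst
    linarith
  refine (lintegral_mono hpointwise).trans ?_
  rw [← ofReal_integral_eq_lintegral_ofReal (integrable_inv_one_add_sq.const_mul 2)
    (Filter.Eventually.of_forall fun x => by positivity), integral_const_mul,
    integral_univ_inv_one_add_sq]
  exact ENNReal.ofReal_le_ofReal (by linarith [Real.pi_le_four])

lemma lintegral_sq_meanInvNorm_le {ε : ℝ} (hε : 0 < ε) (hε1 : ε ≤ 1) (b : ℕ → ℝ) (n : ℕ) :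
    ∫⁻ x, meanInvNorm ε b n (x, 1) ^ 2
      ≤ ENNReal.ofReal (8 * (1 - ε ^ 4 / 14400) ^ (n / 2)) := by
  have hmeas : ∀ n, Measurable fun x => meanInvNorm ε b n (x, 1) := fun n =>
    (measurable_meanInvNorm ε b n).comp (by fun_prop)
  have hfactor : 0 ≤ 1 - ε ^ 4 / 14400 := by linarith [pow_le_one₀ (n := 4) hε.le hε1]
  induction n using Nat.twoStepInduction with
  | zero => simpa using lintegral_sq_meanInvNorm_zero_le ε b
  | one =>
    rw [lintegral_sq_meanInvNorm_succ]
    simpa using (lintegral_sq_transferStep_le _ _ _).trans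
      ((lintegral_sq_smoothing_le hε (hmeas 0)).trans (lintegral_sq_meanInvNorm_zero_le ε b))
  | more n ih _ =>
    rw [lintegral_sq_meanInvNorm_succ,
      transferStep_congr fun x hx => meanInvNorm_succ_eq_transferStep ε b n hx]
    refine (lintegral_sq_transferStep_transferStep_le hε hε1 _ _ (hmeas n)).trans ?_
    rw [Nat.add_div_right n two_pos, pow_succ' _ (n / 2), mul_left_comm, ENNReal.ofReal_mul hfactor]
    gcongr

lemma sq_meanInvNorm_le {ε : ℝ} (hε : 0 < ε) (hε1 : ε ≤ 1) (b : ℕ → ℝ) (n : ℕ) :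
    meanInvNorm ε b (n + 1) (1, 0) ^ 2
      ≤ ENNReal.ofReal (4 / ε * (1 - ε ^ 4 / 14400) ^ (n / 2)) := by
  have hmeas : Measurable fun x => meanInvNorm ε b n (x, 1) :=
    (measurable_meanInvNorm ε b n).comp (by fun_prop)
  calc meanInvNorm ε b (n + 1) (1, 0) ^ 2
      = smoothing ε (fun x => meanInvNorm ε b n (x, 1)) (b n) ^ 2 := by
        simp only [meanInvNorm, smoothing, mul_one, sub_zero]
    _ ≤ (ENNReal.ofReal (2 * ε))⁻¹ * ∫⁻ x, meanInvNorm ε b n (x, 1) ^ 2 :=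
        (sq_smoothing_le hε hmeas _).trans (smoothing_le _ _ _)
    _ ≤ (ENNReal.ofReal (2 * ε))⁻¹ * ENNReal.ofReal (8 * (1 - ε ^ 4 / 14400) ^ (n / 2)) := by
        gcongr
        exact lintegral_sq_meanInvNorm_le hε hε1 b n
    _ = ENNReal.ofReal (4 / ε * (1 - ε ^ 4 / 14400) ^ (n / 2)) := by
        rw [← ENNReal.ofReal_inv_of_pos (by positivity), ← ENNReal.ofReal_mul (by positivity)]
        congr 1
        field_simp
        ring

/-! ### Probability of resonances -/

section Marginal

variable {ι : Type*} [DecidableEq ι] {X : ι → Type*} [∀ i, MeasurableSpace (X i)]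
  (μ : ∀ i, Measure (X i))

lemma lmarginal_le_lmarginal_erase [∀ i, SigmaFinite (μ i)] {S : Finset ι} {i : ι} (hi : i ∈ S)
    {f g : (∀ i, X i) → ℝ≥0∞} (hf : Measurable f)
    (h : ∀ x, ∫⁻ v, f (Function.update x i v) ∂μ i ≤ g x) :
    ∫⋯∫⁻_S, f ∂μ ≤ ∫⋯∫⁻_S.erase i, g ∂μ := by
  rw [lmarginal_erase' _ hf hi]
  exact lmarginal_mono h

lemma lmarginal_lintegral_swap [∀ i, SigmaFinite (μ i)] {α : Type*} [MeasurableSpace α]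
    (ν : Measure α) [SFinite ν] (S : Finset ι) {F : α → (∀ i, X i) → ℝ≥0∞}
    (hF : Measurable (Function.uncurry F)) (x : ∀ i, X i) :
    (∫⋯∫⁻_S, fun w => ∫⁻ a, F a w ∂ν ∂μ) x = ∫⁻ a, (∫⋯∫⁻_S, F a ∂μ) x ∂ν :=
  lintegral_lintegral_swap
    (hF.comp (measurable_snd.prodMk (measurable_updateFinset.comp measurable_fst))).aemeasurable

lemma lmarginal_const_mul (S : Finset ι) (c : ℝ≥0∞) {f : (∀ i, X i) → ℝ≥0∞} (hf : Measurable f)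
    (x : ∀ i, X i) : (∫⋯∫⁻_S, fun w => c * f w ∂μ) x = c * (∫⋯∫⁻_S, f ∂μ) x :=
  lintegral_const_mul c (hf.comp measurable_updateFinset)

variable [∀ i, IsProbabilityMeasure (μ i)]

lemma lmarginal_const (S : Finset ι) (c : ℝ≥0∞) (x : ∀ i, X i) :
    (∫⋯∫⁻_S, fun _ => c ∂μ) x = c := by
  simp [lmarginal]

lemma exists_notMem_of_sum_lmarginal_lt_one (S : Finset ι) (x : ∀ i, X i) {C : ∀ i, Set (X i)}
    (hC : ∀ i, ∀ᵐ v ∂μ i, v ∈ C i) {α : Type*} {I : Finset α} {B : α → Set (∀ i, X i)}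
    (hB : ∀ a ∈ I, MeasurableSet (B a))
    (h : ∑ a ∈ I, (∫⋯∫⁻_S, (B a).indicator 1 ∂μ) x < 1) :
    ∃ w : ∀ i, X i, (∀ i ∈ S, w i ∈ C i) ∧ (∀ i ∉ S, w i = x i) ∧ ∀ a ∈ I, w ∉ B a := by
  set P := Measure.pi fun i : S => μ i
  have hsmall : P (⋃ a ∈ I, Function.updateFinset x S ⁻¹' B a) < 1 := by
    refine (measure_biUnion_finset_le _ _).trans_lt ((Finset.sum_le_sum fun a ha => ?_).trans_lt h)
    rw [← lintegral_indicator_one (measurable_updateFinset (hB a ha))]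
    exact le_rfl
  have hsupport : ∀ᵐ y ∂P, ∀ i : S, y i ∈ C i := ae_all_iff.2 fun i =>
    (Measure.quasiMeasurePreserving_eval (fun i : S => μ i) i).ae (hC i)
  have hgood : ∃ᵐ y ∂P, y ∉ ⋃ a ∈ I, Function.updateFinset x S ⁻¹' B a := fun hbad => by
    simp only [not_not] at hbad
    exact hsmall.ne ((measure_congr (Filter.eventuallyEq_univ.2 hbad)).trans measure_univ)
  obtain ⟨y, hy, hyC⟩ := (hgood.and_eventually hsupport).exists
  refine ⟨Function.updateFinset x S y, fun i hi => ?_, fun i hi => ?_, fun a ha hya =>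
    hy (Set.mem_biUnion ha hya)⟩
  · simpa [Function.updateFinset, hi] using hyC ⟨i, hi⟩
  · simp [Function.updateFinset, hi]

end Marginal

lemma volume_le_of_mapsTo_of_abs_sub_le {B T : Set ℝ} {F : ℝ → ℝ} {K : ℝ≥0}
    (hF : Set.MapsTo F B T) (h : ∀ v ∈ B, ∀ v' ∈ B, |v - v'| ≤ K * |F v - F v'|) :
    volume B ≤ K * volume T := by
  have hanti : AntilipschitzWith K fun v : B => F v :=
    AntilipschitzWith.of_le_mul_dist fun v v' => h v v.2 v' v'.2
  have hpreimage := hanti.hausdorffMeasure_preimage_le zero_le_one T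
  have hcoe := (isometry_subtype_coe (s := B)).hausdorffMeasure_image (d := 1)
    (Or.inl zero_le_one) Set.univ
  rw [Set.eq_univ_of_forall fun v : B => Set.mem_preimage.2 (hF v.2), ← hcoe, Set.image_univ,
    Subtype.range_coe, hausdorffMeasure_real, ENNReal.rpow_one] at hpreimage
  exact hpreimage

/-- The perturbations `w` for which the box Hamiltonian with potential `U + w` has a normalized
eigenvector in `A` with energy in `T`. -/
def resonantSet (U : ℤ → ℝ) (N : ℕ) (T : Set ℝ) (A : Set (ℤ → ℝ)) : Set (ℤ → ℝ) :=
  {w | ∃ E ∈ T, ∃ φ ∈ A, IsBoxEigenvector (U + w) N E φ}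

lemma isClosed_setOf_isBoxEigenvector (N : ℕ) :
    IsClosed {z : (ℤ → ℝ) × ℝ × (ℤ → ℝ) | IsBoxEigenvector z.1 N z.2.1 z.2.2} := by
  have hconj : {z : (ℤ → ℝ) × ℝ × (ℤ → ℝ) | IsBoxEigenvector z.1 N z.2.1 z.2.2}
      = {z | (∀ n ∉ latticeBox N, z.2.2 n = 0) ∧
          (∀ n ∈ latticeBox N, schrodinger z.1 z.2.2 n = z.2.1 * z.2.2 n) ∧
          ∑ n ∈ latticeBox N, z.2.2 n ^ 2 = 1} :=
    Set.ext fun _ => ⟨fun h => ⟨h.1, h.2, h.3⟩, fun h => ⟨h.1, h.2.1, h.2.2⟩⟩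
  simp only [hconj, schrodinger, Set.ofPred_and, Set.ofPred_forall]
  refine .inter ?_ (.inter ?_ ?_)
  · exact isClosed_iInter fun n => isClosed_iInter fun _ => isClosed_eq (by fun_prop) (by fun_prop)
  · exact isClosed_iInter fun n => isClosed_iInter fun _ => isClosed_eq (by fun_prop) (by fun_prop)
  · exact isClosed_eq (by fun_prop) (by fun_prop)

lemma isClosed_resonantSet (U : ℤ → ℝ) (N : ℕ) {T : Set ℝ} (hT : IsCompact T)
    {A : Set (ℤ → ℝ)} (hA : IsClosed A) : IsClosed (resonantSet U N T A) := by
  set K : Set (ℝ × (ℤ → ℝ)) := T ×ˢ Set.pi Set.univ fun _ => Set.Icc (-1) 1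
  have : CompactSpace K := isCompact_iff_compactSpace.1
    (hT.prod (isCompact_univ_pi fun _ => isCompact_Icc))
  set Z : Set ((ℤ → ℝ) × K) := {z | z.2.1.2 ∈ A ∧ IsBoxEigenvector (U + z.1) N z.2.1.1 z.2.1.2}
  have hZ : IsClosed Z := (hA.preimage (by fun_prop)).inter
    ((isClosed_setOf_isBoxEigenvector N).preimage
      (f := fun z : (ℤ → ℝ) × K => (U + z.1, z.2.1.1, z.2.1.2)) (by fun_prop))
  have hproj : resonantSet U N T A = Prod.fst '' Z := by
    ext w
    constructor
    · rintro ⟨E, hE, φ, hφA, hφ⟩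
      exact ⟨(w, ⟨(E, φ), hE, fun n _ => abs_le.1 (hφ.abs_le_one n)⟩), ⟨hφA, hφ⟩, rfl⟩
    · rintro ⟨⟨w, ⟨⟨E, φ⟩, hE, _⟩⟩, ⟨hφA, hφ⟩, rfl⟩
      exact ⟨E, hE, φ, hφA, hφ⟩
  rw [hproj]
  exact isClosedMap_fst_of_compactSpace _ hZ

lemma isClosed_setOf_le_abs_apply {ι : Type*} (κ : ℝ) (p : ι) :
    IsClosed {φ : ι → ℝ | κ ≤ |φ p|} :=
  isClosed_le continuous_const (continuous_apply p).abs

/- Green's identity expresses the difference of the energies at `v` and `v'` through the difference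
`v - v'`, the eigenvectors being bounded below at `p`: the energy expands distances. -/
lemma volume_resonant_slice_le (U : ℤ → ℝ) (N : ℕ) (T : Set ℝ) {p : ℤ} (hp : p ∈ latticeBox N)
    {κ : ℝ} (hκ : 0 < κ) :
    volume {v | ∃ E ∈ T, ∃ φ, κ ≤ |φ p| ∧ IsBoxEigenvector (Function.update U p v) N E φ}
      ≤ ENNReal.ofReal (κ ^ 2)⁻¹ * volume T := by
  set B := {v | ∃ E ∈ T, ∃ φ, κ ≤ |φ p| ∧ IsBoxEigenvector (Function.update U p v) N E φ}
  have hchoice : ∀ v, ∃ E, v ∈ B → E ∈ T ∧ ∃ φ, κ ≤ |φ p| ∧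
      IsBoxEigenvector (Function.update U p v) N E φ := fun v => by
    by_cases hv : v ∈ B
    · exact hv.imp fun E h _ => h
    · exact ⟨0, fun h => absurd h hv⟩
  choose F hF using hchoice
  refine volume_le_of_mapsTo_of_abs_sub_le (F := F) (fun v hv => (hF v hv).1) fun v hv v' hv' => ?_
  obtain ⟨-, φ, hφp, hφ⟩ := hF v hv
  obtain ⟨-, φ', hφp', hφ'⟩ := hF v' hv'
  have green := hφ'.energy_sub_mul_sum hφ.schrodinger_eq
  have hsingle : ∑ n ∈ latticeBox N, (Function.update U p v n - Function.update U p v' n)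
      * (φ' n * φ n) = (v - v') * (φ' p * φ p) := by
    rw [Finset.sum_eq_single_of_mem p hp (fun n _ hn => by simp [Function.update_of_ne hn])]
    simp
  rw [hφ.eq_zero_right, hφ.eq_zero_left, hsingle, mul_zero, mul_zero, add_zero, zero_add] at green
  have hoverlap : |∑ n ∈ latticeBox N, φ' n * φ n| ≤ 1 := by
    have := abs_sum_mul_le_half (latticeBox N) φ' φ
    rw [hφ.sum_sq, hφ'.sum_sq] at this
    linarith
  have hexpand : κ ^ 2 * |v - v'| ≤ |F v - F v'| :=
    calc κ ^ 2 * |v - v'| ≤ |φ' p| * |φ p| * |v - v'| := by rw [sq]; gcongr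
      _ = |F v - F v'| * |∑ n ∈ latticeBox N, φ' n * φ n| := by
        rw [← abs_mul, ← abs_mul, ← abs_mul, green, mul_comm]
      _ ≤ |F v - F v'| := mul_le_of_le_one_right (abs_nonneg _) hoverlap
  rw [Real.coe_toNNReal _ (by positivity), inv_mul_eq_div, le_div_iff₀ (by positivity), mul_comm]
  exact hexpand

lemma lintegral_resonantSet_update_le (ε : ℝ) (U : ℤ → ℝ) (N : ℕ) {T : Set ℝ} (hT : IsCompact T)
    {p : ℤ} (hp : p ∈ latticeBox N) {κ : ℝ} (hκ : 0 < κ) {A : Set (ℤ → ℝ)} (hA : IsClosed A)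
    (hAκ : ∀ φ ∈ A, κ ≤ |φ p|) (w : ℤ → ℝ) {T' : Set ℝ}
    (hT' : ∀ v, ∀ E ∈ T, ∀ φ ∈ A, IsBoxEigenvector (U + Function.update w p v) N E φ → E ∈ T') :
    ∫⁻ v, (resonantSet U N T A).indicator 1 (Function.update w p v) ∂uniformInterval ε
      ≤ (ENNReal.ofReal (2 * ε))⁻¹ * (ENNReal.ofReal (κ ^ 2)⁻¹ * volume T') := by
  have hmeas : MeasurableSet (Function.update w p ⁻¹' resonantSet U N T A) :=
    (isClosed_resonantSet U N hT hA).measurableSet.preimage (measurable_update w)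
  have hsub : Function.update w p ⁻¹' resonantSet U N T A ⊆ (U p + ·) ⁻¹' {v | ∃ E ∈ T', ∃ φ,
      κ ≤ |φ p| ∧ IsBoxEigenvector (Function.update (U + w) p v) N E φ} := by
    rintro v ⟨E, hE, φ, hφA, hφ⟩
    refine ⟨E, hT' v E hE φ hφA hφ, φ, hAκ φ hφA, hφ.congr fun n _ => ?_⟩
    by_cases hn : n = p
    · subst hn; simp
    · simp [hn]
  calc ∫⁻ v, (resonantSet U N T A).indicator 1 (Function.update w p v) ∂uniformInterval ε
      = uniformInterval ε (Function.update w p ⁻¹' resonantSet U N T A) :=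
        lintegral_indicator_one hmeas
    _ ≤ (ENNReal.ofReal (2 * ε))⁻¹ * volume (Function.update w p ⁻¹' resonantSet U N T A) :=
        uniformInterval_le ε _
    _ ≤ (ENNReal.ofReal (2 * ε))⁻¹ * (ENNReal.ofReal (κ ^ 2)⁻¹ * volume T') := by
        gcongr
        refine (measure_mono hsub).trans ?_
        rw [measure_preimage_add]
        exact volume_resonant_slice_le _ N T' hp hκ

lemma lmarginal_resonantSet_le {ε : ℝ} (hε : 0 < ε) (U : ℤ → ℝ) {N : ℕ} {T : Set ℝ}
    (hT : IsCompact T) {S : Finset ℤ} {p : ℤ} (hp : p ∈ latticeBox N) (hpS : p ∈ S) {κ : ℝ}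
    (hκ : 0 < κ) {A : Set (ℤ → ℝ)} (hA : IsClosed A) (hAκ : ∀ φ ∈ A, κ ≤ |φ p|) (x : ℤ → ℝ) :
    (∫⋯∫⁻_S, (resonantSet U N T A).indicator 1 ∂fun _ => uniformInterval ε) x
      ≤ (ENNReal.ofReal (2 * ε))⁻¹ * (ENNReal.ofReal (κ ^ 2)⁻¹ * volume T) := by
  have := isProbabilityMeasure_uniformInterval hε
  refine (lmarginal_le_lmarginal_erase _ hpS
    (measurable_const.indicator (isClosed_resonantSet U N hT hA).measurableSet)
    (fun w => lintegral_resonantSet_update_le ε U N hT hp hκ hA hAκ w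
      fun v E hE _ _ _ => hE) x).trans_eq ?_
  rw [lmarginal_const]

/-- The product of `n` transfer matrices with energies `b j`, applied to `z`; the matrix of index
`n - 1` acts first and the one of index `0` last. -/
def transferVec (b : ℕ → ℝ) : ℕ → ℝ × ℝ → ℝ × ℝ
  | 0, z => z
  | n + 1, z => transferVec b n (b n * z.1 - z.2, z.1)

lemma transferVec_smul (b : ℕ → ℝ) (n : ℕ) (c : ℝ) (z : ℝ × ℝ) :
    transferVec b n (c • z) = c • transferVec b n z := by
  induction n generalizing z with
  | zero => rfl
  | succ n ih =>
    simp only [transferVec, ← ih, Prod.smul_mk, Prod.smul_fst, Prod.smul_snd, smul_eq_mul]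
    congr 2
    ring

lemma continuous_transferVec {α : Type*} [TopologicalSpace α] {b : α → ℕ → ℝ} {z : α → ℝ × ℝ}
    (hb : Continuous b) (hz : Continuous z) (n : ℕ) :
    Continuous fun a => transferVec (b a) n (z a) := by
  induction n generalizing z with
  | zero => exact hz
  | succ n ih => exact ih (z := fun a => (b a n * (z a).1 - (z a).2, (z a).1)) (by fun_prop)

lemma transferVec_eq_of_recurrence {f b : ℕ → ℝ} {n : ℕ}
    (h : ∀ j < n, f (j + 2) + f j = b j * f (j + 1)) :
    transferVec b n (f n, f (n + 1)) = (f 0, f 1) := by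
  induction n with
  | zero => rfl
  | succ n ih =>
    rw [transferVec, ← ih fun j hj => h j (by omega)]
    congr 2
    linarith [h n n.lt_succ_self]

lemma lmarginal_inv_enorm_transferVec {ε : ℝ} (hε : 0 < ε) (b : ℕ → ℝ) {ι : Type*}
    [Countable ι] [DecidableEq ι] {s : ℕ → ι} (hs : Function.Injective s) (n : ℕ) (z : ℝ × ℝ)
    (x : ι → ℝ) :
    (∫⋯∫⁻_(Finset.range n).image s, fun w => ‖transferVec (fun j => b j - w (s j)) n z‖ₑ⁻¹
      ∂fun _ => uniformInterval ε) x = meanInvNorm ε b n z := by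
  have := isProbabilityMeasure_uniformInterval hε
  induction n generalizing z x with
  | zero => simp [transferVec, meanInvNorm]
  | succ n ih =>
    have hnotMem : s n ∉ (Finset.range n).image s := by simp [hs.eq_iff]
    rw [Finset.range_add_one, Finset.image_insert, lmarginal_insert _ _ hnotMem, meanInvNorm]
    · refine lintegral_congr fun v => ?_
      rw [← ih _ (Function.update x (s n) v)]
      refine lintegral_congr fun y => ?_
      simp [transferVec, Function.updateFinset, hnotMem]
    · exact (continuous_transferVec (by fun_prop) continuous_const _).measurable.enorm.inv

lemma lmarginal_inv_enorm_transferVec_le {ε : ℝ} (hε : 0 < ε) (hε1 : ε ≤ 1) (b : ℕ → ℝ)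
    {ι : Type*} [Countable ι] [DecidableEq ι] {s : ℕ → ι} (hs : Function.Injective s) (n : ℕ)
    {S : Finset ι} (hS : (Finset.range (n + 1)).image s ⊆ S) (x : ι → ℝ) :
    (∫⋯∫⁻_S, fun w => ‖transferVec (fun j => b j - w (s j)) (n + 1) (1, 0)‖ₑ⁻¹
      ∂fun _ => uniformInterval ε) x
        ≤ ENNReal.ofReal √(4 / ε * (1 - ε ^ 4 / 14400) ^ (n / 2)) := by
  have := isProbabilityMeasure_uniformInterval hε
  have hrate : 0 ≤ 4 / ε * (1 - ε ^ 4 / 14400) ^ (n / 2) :=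
    mul_nonneg (by positivity) (pow_nonneg (by linarith [pow_le_one₀ hε.le hε1 (n := 4)]) _)
  rw [← Finset.sdiff_union_of_subset hS, lmarginal_union _ _ _ Finset.sdiff_disjoint,
    funext (lmarginal_inv_enorm_transferVec hε b hs (n + 1) (1, 0)), lmarginal_const]
  · refine (ENNReal.pow_le_pow_left_iff two_ne_zero).1 ?_
    rw [← ENNReal.ofReal_pow (Real.sqrt_nonneg _), Real.sq_sqrt hrate]
    exact sq_meanInvNorm_le hε hε1 b n
  · exact (continuous_transferVec (by fun_prop) continuous_const _).measurable.enorm.inv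

lemma unit_mul_natCast_mem_latticeBox (σ : ℤˣ) {k N : ℕ} : (σ * k : ℤ) ∈ latticeBox N ↔ k ≤ N := by
  rcases Int.units_eq_one_or σ with rfl | rfl <;> simp

lemma unit_mul_natCast_injective (σ : ℤˣ) : Function.Injective fun k : ℕ => (σ * k : ℤ) :=
  fun i j hij => by simpa using hij

/-- A bound for normalized box eigenvectors of energy `E` at the edge site `σ * (m + n + 1)` of
the box: the vector `(1, 0)` is transported from the edge inwards to the site `σ * m`. -/
def edgeBound (U : ℤ → ℝ) (σ : ℤˣ) (m n : ℕ) (E : ℝ) : ℝ≥0∞ :=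
  ‖transferVec (fun j => E - U (σ * (m + j + 1 : ℕ))) (n + 1) (1, 0)‖ₑ⁻¹

lemma IsBoxEigenvector.enorm_apply_edge_le {U : ℤ → ℝ} {m n : ℕ} {E : ℝ} {φ : ℤ → ℝ}
    (hφ : IsBoxEigenvector U (m + n + 1) E φ) (σ : ℤˣ) :
    ‖φ (σ * (m + n + 1 : ℕ))‖ₑ ≤ edgeBound U σ m n E := by
  set f : ℕ → ℝ := fun j => φ (σ * (m + j : ℕ))
  have hrec : ∀ j < n + 1, f (j + 2) + f j = (E - U (σ * (m + j + 1 : ℕ))) * f (j + 1) := by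
    intro j hj
    have heq := hφ.schrodinger_eq (σ * (m + j + 1 : ℕ))
      ((unit_mul_natCast_mem_latticeBox σ).2 (by omega))
    rw [schrodinger_eq_unit _ _ σ] at heq
    have hnext : (σ * (m + j + 1 : ℕ) + σ : ℤ) = σ * (m + (j + 2) : ℕ) := by push_cast; ring
    have hprev : (σ * (m + j + 1 : ℕ) - σ : ℤ) = σ * (m + j : ℕ) := by push_cast; ring
    rw [hnext, hprev] at heq
    linear_combination heq
  have hedge : f (n + 1 + 1) = 0 :=
    hφ.eq_zero _ fun h => absurd ((unit_mul_natCast_mem_latticeBox σ).1 h) (by omega)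
  have htransfer := transferVec_eq_of_recurrence hrec
  rw [hedge, show ((f (n + 1), 0) : ℝ × ℝ) = f (n + 1) • (1, 0) by simp, transferVec_smul]
    at htransfer
  have hnorm : ‖(f 0, f 1)‖ ≤ 1 := max_le (hφ.abs_le_one _) (hφ.abs_le_one _)
  rw [edgeBound, ENNReal.le_inv_iff_mul_le, ← enorm_smul,
    show φ (σ * (m + n + 1 : ℕ)) = f (n + 1) from rfl, htransfer, ← ofReal_norm]
  simpa using hnorm

lemma edgeBound_add_update (U w : ℤ → ℝ) (σ : ℤˣ) (m n : ℕ) (v E : ℝ) :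
    edgeBound (U + Function.update w (σ * m) v) σ m n E = edgeBound (U + w) σ m n E := by
  have hne : ∀ j : ℕ, (σ * (m + j + 1 : ℕ) : ℤ) ≠ σ * m := fun j h => by
    have := unit_mul_natCast_injective σ h
    omega
  simp only [edgeBound, Pi.add_apply, Function.update_of_ne (hne _)]

lemma measurable_edgeBound_add (U : ℤ → ℝ) (σ : ℤˣ) (m n : ℕ) :
    Measurable (Function.uncurry fun E w => edgeBound (U + w) σ m n E) :=
  (continuous_transferVec (b := fun z : ℝ × (ℤ → ℝ) => fun j : ℕ =>
    z.1 - (U + z.2) (σ * (m + j + 1 : ℕ))) (by fun_prop) continuous_const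
      (n + 1)).measurable.enorm.inv

lemma lmarginal_edgeBound_le {ε : ℝ} (hε : 0 < ε) (hε1 : ε ≤ 1) (U : ℤ → ℝ) (σ : ℤˣ) {m n : ℕ}
    {S : Finset ℤ} (hS : ∀ k : ℕ, m < k → k ≤ m + n + 1 → (σ * k : ℤ) ∈ S) (E : ℝ) (x : ℤ → ℝ) :
    (∫⋯∫⁻_S, fun w => edgeBound (U + w) σ m n E ∂fun _ => uniformInterval ε) x
      ≤ ENNReal.ofReal √(4 / ε * (1 - ε ^ 4 / 14400) ^ (n / 2)) := by
  have hinj : Function.Injective fun j : ℕ => (σ * (m + j + 1 : ℕ) : ℤ) :=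
    (unit_mul_natCast_injective σ).comp fun i j hij => by
      simpa using hij
  have hsites : (Finset.range (n + 1)).image (fun j : ℕ => (σ * (m + j + 1 : ℕ) : ℤ)) ⊆ S :=
    Finset.image_subset_iff.2 fun j hj => hS _ (by omega) (by
      have := Finset.mem_range.1 hj
      omega)
  simpa only [edgeBound, Pi.add_apply, sub_sub] using
    lmarginal_inv_enorm_transferVec_le hε hε1 (fun j => E - U (σ * (m + j + 1 : ℕ))) hinj n hsites x

/- The energy is determined by the potential at `σ * m` up to a set of small measure, while the
transfer matrices between `σ * m` and the edge do not depend on that value. -/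
lemma lintegral_resonantSet_update_edge_le (ε : ℝ) (U : ℤ → ℝ) {T : Set ℝ} (hT : IsCompact T)
    (σ : ℤˣ) (m n : ℕ) {κ δ : ℝ} (hκ : 0 < κ) (hδ : 0 < δ) (w : ℤ → ℝ) :
    ∫⁻ v, (resonantSet U (m + n + 1) T
        {φ | κ ≤ |φ (σ * m)| ∧ δ ≤ |φ (σ * (m + n + 1 : ℕ))|}).indicator 1
          (Function.update w (σ * m) v) ∂uniformInterval ε
      ≤ (ENNReal.ofReal (2 * ε))⁻¹ * (ENNReal.ofReal (κ ^ 2)⁻¹ * ((ENNReal.ofReal δ)⁻¹ *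
        ∫⁻ E in T, edgeBound (U + w) σ m n E)) := by
  set A : Set (ℤ → ℝ) := {φ | κ ≤ |φ (σ * m)| ∧ δ ≤ |φ (σ * (m + n + 1 : ℕ))|}
  have hA : IsClosed A :=
    (isClosed_setOf_le_abs_apply κ _).inter (isClosed_setOf_le_abs_apply δ _)
  have hbound : Measurable fun E => edgeBound (U + w) σ m n E :=
    (measurable_edgeBound_add U σ m n).of_uncurry_right
  set T' := {E | ENNReal.ofReal δ ≤ edgeBound (U + w) σ m n E} ∩ T
  have hmarkov : volume T' ≤ (ENNReal.ofReal δ)⁻¹ * ∫⁻ E in T, edgeBound (U + w) σ m n E := by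
    rw [← Measure.restrict_apply (measurableSet_le measurable_const hbound), mul_comm,
      ← div_eq_mul_inv]
    exact meas_ge_le_lintegral_div hbound.aemeasurable (by simpa using hδ) ENNReal.ofReal_ne_top
  have hmem : (σ * m : ℤ) ∈ latticeBox (m + n + 1) :=
    (unit_mul_natCast_mem_latticeBox σ).2 (by omega)
  have henergy : ∀ v, ∀ E ∈ T, ∀ φ ∈ A, IsBoxEigenvector
      (U + Function.update w (σ * m) v) (m + n + 1) E φ → E ∈ T' := fun v E hE φ hφA hφ => by
    refine ⟨?_, hE⟩
    rw [Set.mem_ofPred_eq, ← edgeBound_add_update U w σ m n v]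
    refine le_trans ?_ (hφ.enorm_apply_edge_le σ)
    rw [← ofReal_norm]
    exact ENNReal.ofReal_le_ofReal hφA.2
  exact (lintegral_resonantSet_update_le ε U _ hT hmem hκ hA (fun φ hφ => hφ.1) w henergy).trans
    (by gcongr)

lemma lmarginal_resonantSet_edge_le {ε : ℝ} (hε : 0 < ε) (hε1 : ε ≤ 1) (U : ℤ → ℝ) {T : Set ℝ}
    (hT : IsCompact T) {S : Finset ℤ} (σ : ℤˣ) {m n N : ℕ} (hN : m + n + 1 = N)
    (hS : ∀ k : ℕ, m ≤ k → k ≤ N → (σ * k : ℤ) ∈ S) {κ δ : ℝ} (hκ : 0 < κ) (hδ : 0 < δ)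
    (x : ℤ → ℝ) :
    (∫⋯∫⁻_S, (resonantSet U N T {φ | κ ≤ |φ (σ * m)| ∧ δ ≤ |φ (σ * N)|}).indicator 1
        ∂fun _ => uniformInterval ε) x
      ≤ (ENNReal.ofReal (2 * ε))⁻¹ * (ENNReal.ofReal (κ ^ 2)⁻¹ * ((ENNReal.ofReal δ)⁻¹ *
        (ENNReal.ofReal √(4 / ε * (1 - ε ^ 4 / 14400) ^ (n / 2)) * volume T))) := by
  subst hN
  have := isProbabilityMeasure_uniformInterval hε
  set A : Set (ℤ → ℝ) := {φ | κ ≤ |φ (σ * m)| ∧ δ ≤ |φ (σ * (m + n + 1 : ℕ))|}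
  have hA : IsClosed A :=
    (isClosed_setOf_le_abs_apply κ _).inter (isClosed_setOf_le_abs_apply δ _)
  have hbound := measurable_edgeBound_add U σ m n
  have hslice := lintegral_resonantSet_update_edge_le ε U hT σ m n hκ hδ
  have hinner : Measurable fun w => ∫⁻ E in T, edgeBound (U + w) σ m n E :=
    hbound.lintegral_prod_left'
  have hmean : (∫⋯∫⁻_S.erase (σ * m), fun w => (∫⁻ E in T, edgeBound (U + w) σ m n E)
      ∂fun _ => uniformInterval ε) x
        ≤ ENNReal.ofReal √(4 / ε * (1 - ε ^ 4 / 14400) ^ (n / 2)) * volume T := by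
    rw [lmarginal_lintegral_swap (fun _ => uniformInterval ε) (volume.restrict T) _ hbound x,
      ← setLIntegral_const]
    refine lintegral_mono fun E => lmarginal_edgeBound_le hε hε1 U σ (fun k hmk hk => ?_) E x
    refine Finset.mem_erase.2 ⟨fun h => ?_, hS k hmk.le hk⟩
    exact hmk.ne' (unit_mul_natCast_injective σ h)
  refine (lmarginal_le_lmarginal_erase _ (hS m le_rfl (by omega)) (measurable_const.indicator
    (isClosed_resonantSet U _ hT hA).measurableSet) hslice x).trans ?_
  simp only [← mul_assoc] at hmean ⊢
  rw [lmarginal_const_mul _ _ _ hinner]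
  rw [mul_assoc _ (ENNReal.ofReal √_)]
  gcongr

/-- The perturbations of `U` for which some eigenvector of the box `[-N', N']` with energy
`2 * h`-close to `E a.1` has size `κ` at the site `a.2`. -/
def shellResonance {ι : Type*} (U : ℤ → ℝ) (E : ι → ℝ) (N' : ℕ) (h κ : ℝ) (a : ι × ℤ) :
    Set (ℤ → ℝ) :=
  resonantSet U N' (Set.Icc (E a.1 - 2 * h) (E a.1 + 2 * h)) {φ | κ ≤ |φ a.2|}

/-- The perturbations of `U` for which some eigenvector of the box `[-N', N']` has size `κ` at
distance `a.2` from the box `[-N, N]` and size `δ` at the edge, both on the side given by the sign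
`a.1`. -/
def edgeResonance (U : ℤ → ℝ) (M : ℝ) (N N' : ℕ) (κ δ : ℝ) (a : ℤˣ × ℕ) : Set (ℤ → ℝ) :=
  resonantSet U N' (Set.Icc (-(M + 2)) (M + 2))
    {φ | κ ≤ |φ (a.1 * (N + a.2 : ℕ))| ∧ δ ≤ |φ (a.1 * N')|}

/-- A bound for the probability of `edgeResonance` when the two sites are at distance more
than `m`. -/
def boundaryBound (ε M κ δ : ℝ) (m : ℕ) : ℝ :=
  (2 * ε)⁻¹ * ((κ ^ 2)⁻¹ * (δ⁻¹ * (√(4 / ε * (1 - ε ^ 4 / 14400) ^ (m / 2)) * (2 * (M + 2)))))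

section Resonance

variable {U : ℤ → ℝ} {N N' : ℕ} {ε M h κ δ : ℝ}

lemma measurableSet_shellResonance {ι : Type*} (E : ι → ℝ) (a : ι × ℤ) :
    MeasurableSet (shellResonance U E N' h κ a) :=
  (isClosed_resonantSet U N' isCompact_Icc (isClosed_setOf_le_abs_apply κ a.2)).measurableSet

lemma measurableSet_edgeResonance (a : ℤˣ × ℕ) :
    MeasurableSet (edgeResonance U M N N' κ δ a) :=
  (isClosed_resonantSet U N' isCompact_Icc ((isClosed_setOf_le_abs_apply κ _).inter
    (isClosed_setOf_le_abs_apply δ _))).measurableSet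

lemma lmarginal_shellResonance_le (hε : 0 < ε) (hκ : 0 < κ) {ι : Type*} (E : ι → ℝ) {a : ι × ℤ}
    (ha : a.2 ∈ latticeBox N' \ latticeBox N) (x : ℤ → ℝ) :
    (∫⋯∫⁻_latticeBox N' \ latticeBox N, (shellResonance U E N' h κ a).indicator 1
      ∂fun _ => uniformInterval ε) x ≤ ENNReal.ofReal (2 * h / (ε * κ ^ 2)) := by
  refine (lmarginal_resonantSet_le hε U isCompact_Icc (Finset.mem_sdiff.1 ha).1 ha hκ
    (isClosed_setOf_le_abs_apply κ a.2) (fun _ hφ => hφ) x).trans_eq ?_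
  rw [Real.volume_Icc, ← ENNReal.ofReal_inv_of_pos (by positivity),
    ← ENNReal.ofReal_mul (by positivity), ← ENNReal.ofReal_mul (by positivity)]
  congr 1
  field

lemma lmarginal_edgeResonance_le (hε : 0 < ε) (hε1 : ε ≤ 1) (hM : 0 ≤ M) (hκ : 0 < κ) (hδ : 0 < δ)
    (hN : N + 3 ≤ N') {a : ℤˣ × ℕ} (ha : a.2 ∈ ({1, 2} : Finset ℕ)) (x : ℤ → ℝ) :
    (∫⋯∫⁻_latticeBox N' \ latticeBox N, (edgeResonance U M N N' κ δ a).indicator 1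
      ∂fun _ => uniformInterval ε) x ≤ ENNReal.ofReal (boundaryBound ε M κ δ (N' - N - 3)) := by
  obtain ⟨σ, k⟩ := a
  simp only [Finset.mem_insert, Finset.mem_singleton] at ha
  have hρ : ε ^ 4 / 14400 ≤ 1 := by linarith [pow_le_one₀ (n := 4) hε.le hε1]
  refine (lmarginal_resonantSet_edge_le hε hε1 U isCompact_Icc σ
    (show (N + k) + (N' - N - k - 1) + 1 = N' by omega) (fun j hj hj' => ?_) hκ hδ x).trans ?_
  · rw [Finset.mem_sdiff, unit_mul_natCast_mem_latticeBox, unit_mul_natCast_mem_latticeBox]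
    omega
  rw [Real.volume_Icc, ← ENNReal.ofReal_inv_of_pos (by positivity),
    ← ENNReal.ofReal_inv_of_pos hδ, ← ENNReal.ofReal_mul (by positivity),
    ← ENNReal.ofReal_mul (by positivity), ← ENNReal.ofReal_mul (by positivity),
    ← ENNReal.ofReal_mul (by positivity), show M + 2 - -(M + 2) = 2 * (M + 2) by ring]
  refine ENNReal.ofReal_le_ofReal ?_
  unfold boundaryBound
  gcongr _ * (_ * (_ * (√(_ * ?_) * _)))
  exact pow_le_pow_of_le_one (sub_nonneg.2 hρ) (sub_le_self _ (by positivity)) (by omega)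

lemma sum_lmarginal_shellResonance_le (hε : 0 < ε) (hκ : 0 < κ) (E : Fin (2 * N + 1) → ℝ)
    (x : ℤ → ℝ) :
    ∑ a ∈ Finset.univ ×ˢ (latticeBox N' \ latticeBox N), (∫⋯∫⁻_latticeBox N' \ latticeBox N,
      (shellResonance U E N' h κ a).indicator 1 ∂fun _ => uniformInterval ε) x
      ≤ ENNReal.ofReal ((2 * N + 1) * (2 * N' + 1) * (2 * h / (ε * κ ^ 2))) := by
  have hcard : (latticeBox N' \ latticeBox N).card ≤ 2 * N' + 1 :=
    (Finset.card_le_card Finset.sdiff_subset).trans_eq (card_latticeBox N')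
  calc _ ≤ (Finset.univ ×ˢ (latticeBox N' \ latticeBox N) : Finset (Fin (2 * N + 1) × ℤ)).card •
          ENNReal.ofReal (2 * h / (ε * κ ^ 2)) :=
        Finset.sum_le_card_nsmul _ _ _ fun a ha =>
          lmarginal_shellResonance_le hε hκ E (Finset.mem_product.1 ha).2 x
    _ ≤ ((2 * N + 1) * (2 * N' + 1)) • ENNReal.ofReal (2 * h / (ε * κ ^ 2)) := by
        rw [Finset.card_product, Finset.card_univ, Fintype.card_fin]
        gcongr
    _ = ENNReal.ofReal ((2 * N + 1) * (2 * N' + 1) * (2 * h / (ε * κ ^ 2))) := by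
        rw [← ENNReal.ofReal_nsmul]
        simp [nsmul_eq_mul]

lemma sum_lmarginal_edgeResonance_le (hε : 0 < ε) (hε1 : ε ≤ 1) (hM : 0 ≤ M) (hκ : 0 < κ)
    (hδ : 0 < δ) (hN : N + 3 ≤ N') (x : ℤ → ℝ) :
    ∑ a ∈ Finset.univ ×ˢ {1, 2}, (∫⋯∫⁻_latticeBox N' \ latticeBox N,
      (edgeResonance U M N N' κ δ a).indicator 1 ∂fun _ => uniformInterval ε) x
      ≤ ENNReal.ofReal (4 * boundaryBound ε M κ δ (N' - N - 3)) := by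
  calc _ ≤ (Finset.univ ×ˢ {1, 2} : Finset (ℤˣ × ℕ)).card •
          ENNReal.ofReal (boundaryBound ε M κ δ (N' - N - 3)) :=
        Finset.sum_le_card_nsmul _ _ _ fun a ha =>
          lmarginal_edgeResonance_le hε hε1 hM hκ hδ hN (Finset.mem_product.1 ha).2 x
    _ = ENNReal.ofReal (4 * boundaryBound ε M κ δ (N' - N - 3)) := by
        rw [show (Finset.univ ×ˢ {1, 2} : Finset (ℤˣ × ℕ)).card = 4 from rfl,
          ← ENNReal.ofReal_nsmul, nsmul_eq_mul, Nat.cast_ofNat]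

lemma boundaryBound_nonneg (hε : 0 < ε) (hM : 0 ≤ M) (hδ : 0 ≤ δ) (m : ℕ) :
    0 ≤ boundaryBound ε M κ δ m := by
  unfold boundaryBound
  positivity

lemma exists_notMem_resonance (hε : 0 < ε) (hε1 : ε ≤ 1) (hM : 0 ≤ M) {κ₁ : ℝ} (hh : 0 < h)
    (hκ₁ : 0 < κ₁) (hκ : 0 < κ) (hδ : 0 < δ) (hN : N + 3 ≤ N') (E : Fin (2 * N + 1) → ℝ)
    (hprob : ((2 * N + 1) * (2 * N' + 1) : ℝ) * (2 * h / (ε * κ₁ ^ 2))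
      + 4 * boundaryBound ε M κ δ (N' - N - 3) < 1) :
    ∃ w : ℤ → ℝ, (∀ n, |w n| ≤ ε) ∧ (∀ n ∉ latticeBox N' \ latticeBox N, w n = 0) ∧
      (∀ a, a.2 ∈ latticeBox N' \ latticeBox N → w ∉ shellResonance U E N' h κ₁ a) ∧
      ∀ a, a.2 ∈ ({1, 2} : Finset ℕ) → w ∉ edgeResonance U M N N' κ δ a := by
  have := isProbabilityMeasure_uniformInterval hε
  set S := latticeBox N' \ latticeBox N
  set I : Finset ((Fin (2 * N + 1) × ℤ) ⊕ (ℤˣ × ℕ)) :=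
    (Finset.univ ×ˢ S).disjSum (Finset.univ ×ˢ {1, 2})
  set B := Sum.elim (shellResonance U E N' h κ₁) (edgeResonance U M N N' κ δ)
  have hB : ∀ a ∈ I, MeasurableSet (B a) := by
    rintro (a | a) -
    exacts [measurableSet_shellResonance E a, measurableSet_edgeResonance a]
  have hsum : ∑ a ∈ I, (∫⋯∫⁻_S, (B a).indicator 1 ∂fun _ => uniformInterval ε) 0 < 1 := by
    refine (Finset.sum_disjSum _ _ _).trans_lt <| (add_le_add
      (sum_lmarginal_shellResonance_le hε hκ₁ E 0)
      (sum_lmarginal_edgeResonance_le hε hε1 hM hκ hδ hN 0)).trans_lt ?_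
    have := boundaryBound_nonneg (κ := κ) hε hM hδ.le (N' - N - 3)
    rw [← ENNReal.ofReal_add (by positivity) (by positivity)]
    exact ENNReal.ofReal_lt_one.2 hprob
  obtain ⟨w, hwS, hw0, hwB⟩ := exists_notMem_of_sum_lmarginal_lt_one (fun _ => uniformInterval ε)
    S 0 (fun _ => ProbabilityTheory.ae_cond_mem measurableSet_Icc) hB hsum
  refine ⟨w, fun n => ?_, hw0,
    fun a ha => hwB (.inl a)
      (Finset.inl_mem_disjSum.2 (Finset.mem_product.2 ⟨Finset.mem_univ _, ha⟩)),
    fun a ha => hwB (.inr a)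
      (Finset.inr_mem_disjSum.2 (Finset.mem_product.2 ⟨Finset.mem_univ _, ha⟩))⟩
  by_cases hn : n ∈ S
  · exact abs_le.2 (hwS n hn)
  · simpa [hw0 n hn] using hε.le

lemma IsBoxEigenbasis.isNonresonant {E : Fin (2 * N + 1) → ℝ} {φ : Fin (2 * N + 1) → ℤ → ℝ}
    {w : ℤ → ℝ} {κ₁ κ₂ : ℝ} (hb : IsBoxEigenbasis U N E φ) (hUw : ∀ n, |(U + w) n| ≤ M)
    (hN : N + 2 ≤ N') (hw : ∀ n ∉ latticeBox N' \ latticeBox N, w n = 0)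
    (hκ : κ * (2 * M + 4) ^ (2 * N + 1) < κ₂)
    (hshell : ∀ a, a.2 ∈ latticeBox N' \ latticeBox N → w ∉ shellResonance U E N' h κ₁ a)
    (hedge : ∀ a, a.2 ∈ ({1, 2} : Finset ℕ) → w ∉ edgeResonance U M N N' κ δ a) :
    IsNonresonant U (U + w) N N' h κ₁ κ₂ δ where
  eq_on_box n hn := by simp [hw n fun hn' => (Finset.mem_sdiff.1 hn').2 hn]
  abs_shell_le e ψ E' χ hψ hχ hE q hq := by
    obtain ⟨i, rfl⟩ := hb.exists_energy_eq hψ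
    by_contra! hlt
    exact hshell (i, q) hq ⟨E', Set.mem_Icc_iff_abs_le.1 (abs_sub_comm E' (E i) ▸ hE), χ,
      hlt.le, hχ⟩
  abs_edge_le E' χ hχ n hn hn' σ := by
    by_contra! hlt
    obtain ⟨k, hk, hχk⟩ := hχ.exists_le_abs_apply_boundary hUw hN hn (hκ.trans_le hn') σ
    exact hedge (σ, k) hk ⟨E', abs_le.1 (hχ.abs_energy_le hUw), χ, ⟨hχk, hlt.le⟩, hχ⟩

lemma exists_isNonresonant {κ₁ κ₂ : ℝ} (hε : 0 < ε) (hε1 : ε ≤ 1) (hU : ∀ n, |U n| ≤ M - 1)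
    (hN : N + 3 ≤ N') (hh : 0 < h) (hκ₁ : 0 < κ₁) (hκ₂ : 0 < κ₂) (hδ : 0 < δ)
    (hprob : ((2 * N + 1) * (2 * N' + 1) : ℝ) * (2 * h / (ε * κ₁ ^ 2))
      + 4 * boundaryBound ε M (κ₂ / (2 * (2 * M + 4) ^ (2 * N + 1))) δ (N' - N - 3) < 1) :
    ∃ w : ℤ → ℝ, (∀ n, |w n| ≤ ε) ∧ (∀ n ∉ latticeBox N', w n = 0) ∧
      IsNonresonant U (U + w) N N' h κ₁ κ₂ δ := by
  have hM : 0 ≤ M := by linarith [(abs_nonneg _).trans (hU 0)]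
  obtain ⟨E, φ, hb⟩ := exists_isBoxEigenbasis U N
  obtain ⟨w, hwε, hw0, hshell, hedge⟩ :=
    exists_notMem_resonance hε hε1 hM hh hκ₁ (by positivity) hδ hN E hprob
  refine ⟨w, hwε, fun n hn => hw0 n fun hn' => hn (Finset.mem_sdiff.1 hn').1,
    hb.isNonresonant (fun n => ?_) (by omega) hw0 ?_ hshell hedge⟩
  · exact (abs_add_le (U n) (w n)).trans (by linarith [hU n, hwε n])
  · field_simp
    linarith

end Resonance

/-! ### Length scales -/

/-- The numerical inequalities relating a length scale `x` to the sizes `N` and `N'` of the inner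
and the outer box. They are the hypotheses of `IsNonresonant.exists_isLocalizedEigenvector` and
`exists_isNonresonant` for quantities decaying exponentially at rates proportional to `Λ`, together
with the bounds that make the corrections of successive scales summable. -/
structure ScaleBounds (M Λ : ℝ) (x N N' : ℕ) : Prop where
  two_le : 2 ≤ x
  lt_inner : x < N
  inner_add_three_le : N + 3 ≤ N'
  shell : (2 * N' + 1) * Real.exp (-(Λ / 8 * x)) ^ 2 ≤ 1 / 4
  core : (2 * N + 1) * Real.exp (-N) ^ 2 ≤ 3 / 4
  gap_le : Real.exp (-(Λ / 16 * N)) ≤ Real.exp (-(Λ / 2 * x))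
  gap_mul_le : Real.exp (-(Λ / 16 * N)) * ((2 * M + 4) ^ (2 * N) * (2 * N + 1)) ≤ 1
  edge : 2 * Real.exp (-(Λ * x)) ^ 2 < Real.exp (-(Λ / 2 * x)) ^ 2
  window : Real.exp (-(Λ / 2 * x)) ≤ Real.exp (-(Λ / 16 * x)) / 2
  step : 2 * (8 * Real.exp (-(Λ / 8 * x)) ^ 2 / Real.exp (-(Λ / 16 * x)) ^ 2
    + (2 * N' + 1) * Real.exp (-(Λ / 8 * x)) ^ 2) ≤ Real.exp (-(Λ / 32 * x)) ^ 2
  halving : Real.exp (-(Λ / 32 * N)) ≤ Real.exp (-(Λ / 32 * x)) / 2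
  probability : ((2 * N + 1) * (2 * N' + 1) : ℝ)
      * (2 * Real.exp (-(Λ / 2 * x)) / (1 / N * Real.exp (-(Λ / 8 * x)) ^ 2))
    + 4 * boundaryBound (1 / N) M (Real.exp (-N) / (2 * (2 * M + 4) ^ (2 * N + 1)))
      (Real.exp (-(Λ * N))) (N' - N - 3) < 1

section ScaleBounds

open Filter

lemma mul_le_pow_six {n : ℕ} (hn : 2 ≤ n) : 32 * n ≤ n ^ 6 := by
  rw [pow_succ]
  exact Nat.mul_le_mul_right n (Nat.pow_le_pow_left hn 5)

lemma exp_neg_mul_sq (c x : ℝ) : Real.exp (-(c * x)) ^ 2 = Real.exp (-(2 * c * x)) := by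
  rw [← Real.exp_nat_mul]
  push_cast
  ring_nf

lemma tendsto_pow_mul_exp_neg_mul (k : ℕ) {c : ℝ} (hc : 0 < c) :
    Tendsto (fun x : ℕ => (x : ℝ) ^ k * Real.exp (-(c * x))) atTop (nhds 0) := by
  have hcx : Tendsto (fun x : ℕ => c * (x : ℝ)) atTop atTop :=
    tendsto_natCast_atTop_atTop.const_mul_atTop hc
  have hlim := ((Real.tendsto_pow_mul_exp_neg_atTop_nhds_zero k).comp hcx).const_mul (c ^ k)⁻¹
  rw [mul_zero] at hlim
  refine hlim.congr fun x => ?_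
  simp only [Function.comp, mul_pow]
  field_simp

lemma eventually_mul_exp_lt_exp (C : ℝ) (k : ℕ) {a b : ℝ} (hab : b < a) :
    ∀ᶠ x : ℕ in atTop, C * (2 * (x : ℝ) ^ k + 1) * Real.exp (-(a * x)) < Real.exp (-(b * x)) := by
  have hlim := (((tendsto_pow_mul_exp_neg_mul k (sub_pos.2 hab)).const_mul 2).add
    (tendsto_pow_mul_exp_neg_mul 0 (sub_pos.2 hab))).const_mul C
  simp only [mul_zero, add_zero] at hlim
  filter_upwards [hlim.eventually_lt_const one_pos] with x hx
  calc C * (2 * (x : ℝ) ^ k + 1) * Real.exp (-(a * x))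
      = C * (2 * (x ^ k * Real.exp (-((a - b) * x))) + x ^ 0 * Real.exp (-((a - b) * x)))
          * Real.exp (-(b * x)) := by
        rw [show -(a * x) = -((a - b) * x) + -(b * x) by ring, Real.exp_add]
        ring
    _ < 1 * Real.exp (-(b * x)) := by gcongr
    _ = Real.exp (-(b * x)) := one_mul _

lemma sqrt_transfer_bound_le {N : ℕ} (hN : 2 ≤ N) :
    √(4 / (1 / N) * (1 - (1 / (N : ℝ)) ^ 4 / 14400) ^ ((N ^ 6 - N - 3) / 2))
      ≤ 2 * N * Real.exp (-((N : ℝ) ^ 2 / 115200)) := by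
  have hNR : (2 : ℝ) ≤ N := by exact_mod_cast hN
  set q := (N ^ 6 - N - 3) / 2
  have hq : (N : ℝ) ^ 6 ≤ 4 * q := by
    have := mul_le_pow_six hN
    exact_mod_cast (show N ^ 6 ≤ 4 * q by omega)
  have hbase : (1 / (N : ℝ)) ^ 4 / 14400 ≤ 1 := by
    rw [div_pow, one_pow, div_div, div_le_one (by positivity)]
    linarith [one_le_pow₀ (n := 4) (by linarith : (1 : ℝ) ≤ N)]
  have hpow : (1 - (1 / (N : ℝ)) ^ 4 / 14400) ^ q ≤ Real.exp (-((N : ℝ) ^ 2 / 57600)) := by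
    calc (1 - (1 / (N : ℝ)) ^ 4 / 14400) ^ q
        ≤ Real.exp (-((1 / (N : ℝ)) ^ 4 / 14400)) ^ q :=
          pow_le_pow_left₀ (sub_nonneg.2 hbase) (Real.one_sub_le_exp_neg _) q
      _ = Real.exp (-(q * ((1 / (N : ℝ)) ^ 4 / 14400))) := by rw [← Real.exp_nat_mul, mul_neg]
      _ ≤ Real.exp (-((N : ℝ) ^ 2 / 57600)) := by
          gcongr
          rw [div_pow, one_pow, div_div, mul_one_div, div_le_div_iff₀ (by norm_num) (by positivity)]
          nlinarith
  refine Real.sqrt_le_iff.2 ⟨by positivity, ?_⟩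
  calc 4 / (1 / N) * (1 - (1 / (N : ℝ)) ^ 4 / 14400) ^ q
      ≤ 4 * (N * N) * Real.exp (-((N : ℝ) ^ 2 / 57600)) := by
        refine mul_le_mul ?_ hpow (pow_nonneg (sub_nonneg.2 hbase) q) (by positivity)
        rw [div_div_eq_mul_div, div_one]
        nlinarith
    _ = (2 * N * Real.exp (-((N : ℝ) ^ 2 / 115200))) ^ 2 := by
        rw [mul_pow, ← Real.exp_nat_mul]
        push_cast
        ring_nf

lemma pow_eq_exp_log_mul {D : ℝ} (hD : 0 < D) (n : ℕ) : D ^ n = Real.exp (Real.log D * n) := by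
  rw [← Real.rpow_natCast, Real.rpow_def_of_pos hD]

lemma boundaryBound_le {M Λ : ℝ} (hM : 0 ≤ M) {N : ℕ} (hN : 2 ≤ N)
    (hN' : 115200 * (4 * Real.log (2 * M + 4) + 3 + Λ) ≤ N) :
    boundaryBound (1 / N) M (Real.exp (-N) / (2 * (2 * M + 4) ^ (2 * N + 1)))
      (Real.exp (-(Λ * N))) (N ^ 6 - N - 3)
      ≤ 8 * (2 * M + 4) ^ 2 * (M + 2) * (N : ℝ) ^ 2 * Real.exp (-N) := by
  set D := 2 * M + 4
  have hD : 0 < D := by positivity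
  calc boundaryBound (1 / N) M (Real.exp (-N) / (2 * D ^ (2 * N + 1))) (Real.exp (-(Λ * N)))
        (N ^ 6 - N - 3)
      ≤ (2 * (1 / (N : ℝ)))⁻¹ * (((Real.exp (-N) / (2 * D ^ (2 * N + 1))) ^ 2)⁻¹
        * ((Real.exp (-(Λ * N)))⁻¹
        * (2 * N * Real.exp (-((N : ℝ) ^ 2 / 115200)) * (2 * (M + 2))))) := by
        unfold boundaryBound
        gcongr
        exact sqrt_transfer_bound_le hN
    _ = 8 * D ^ 2 * (M + 2) * (N : ℝ) ^ 2 * (D ^ (4 * N) * Real.exp N ^ 2 * Real.exp (Λ * N)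
        * Real.exp (-((N : ℝ) ^ 2 / 115200))) := by
        rw [Real.exp_neg (N : ℝ), Real.exp_neg (Λ * N)]
        field_simp
        ring
    _ = 8 * D ^ 2 * (M + 2) * (N : ℝ) ^ 2
        * Real.exp ((4 * Real.log D + 2 + Λ) * N - (N : ℝ) ^ 2 / 115200) := by
        rw [pow_eq_exp_log_mul hD (4 * N), ← Real.exp_nat_mul, ← Real.exp_add, ← Real.exp_add,
          ← Real.exp_add]
        push_cast
        ring_nf
    _ ≤ 8 * D ^ 2 * (M + 2) * (N : ℝ) ^ 2 * Real.exp (-N) := by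
        gcongr
        nlinarith

lemma eventually_boundaryBound_lt {M : ℝ} (hM : 0 ≤ M) (Λ : ℝ) :
    ∀ᶠ N : ℕ in atTop, boundaryBound (1 / N) M (Real.exp (-N) / (2 * (2 * M + 4) ^ (2 * N + 1)))
      (Real.exp (-(Λ * N))) (N ^ 6 - N - 3) < 1 / 8 := by
  filter_upwards [eventually_ge_atTop 2,
    tendsto_natCast_atTop_atTop.eventually_ge_atTop (115200 * (4 * Real.log (2 * M + 4) + 3 + Λ)),
    eventually_mul_exp_lt_exp (8 * (8 * (2 * M + 4) ^ 2 * (M + 2))) 2 one_pos] with N hN hN' hlt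
  rw [one_mul, zero_mul, neg_zero, Real.exp_zero] at hlt
  have hC : 0 ≤ (2 * M + 4) ^ 2 * (M + 2) * Real.exp (-N) := by positivity
  have := boundaryBound_le hM hN hN'
  nlinarith

lemma eventually_gap_mul_le {M Λ : ℝ} (hM : 0 ≤ M) (hΛ : 32 * (Real.log (2 * M + 4) + 1) ≤ Λ) :
    ∀ᶠ N : ℕ in atTop,
      Real.exp (-(Λ / 16 * N)) * ((2 * M + 4) ^ (2 * N) * (2 * N + 1)) ≤ 1 := by
  filter_upwards [eventually_mul_exp_lt_exp 1 1
    (show (0 : ℝ) < Λ / 16 - 2 * Real.log (2 * M + 4) by linarith)] with N hN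
  calc Real.exp (-(Λ / 16 * N)) * ((2 * M + 4) ^ (2 * N) * (2 * N + 1))
      = 1 * (2 * (N : ℝ) ^ 1 + 1) * Real.exp (-((Λ / 16 - 2 * Real.log (2 * M + 4)) * N)) := by
        rw [pow_eq_exp_log_mul (by linarith), show -((Λ / 16 - 2 * Real.log (2 * M + 4)) * N)
          = -(Λ / 16 * N) + Real.log (2 * M + 4) * (2 * N : ℕ) by push_cast; ring, Real.exp_add]
        ring
    _ ≤ 1 := by simpa using hN.le

lemma eventually_shell_probability_le {Λ : ℝ} (hΛ : 0 < Λ) :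
    ∀ᶠ x : ℕ in atTop, ((2 * (x : ℝ) ^ 6 + 1) * (2 * x ^ 36 + 1) : ℝ)
      * (2 * Real.exp (-(Λ / 2 * x)) / (1 / x ^ 6 * Real.exp (-(Λ / 8 * x)) ^ 2)) ≤ 1 / 2 := by
  filter_upwards [eventually_ge_atTop 1,
    eventually_mul_exp_lt_exp 18 48 (show 0 < Λ / 4 by positivity)] with x hx hlt
  have hx6 : (1 : ℝ) ≤ x ^ 6 := one_le_pow₀ (by exact_mod_cast hx)
  have hx36 : (1 : ℝ) ≤ x ^ 36 := one_le_pow₀ (by exact_mod_cast hx)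
  rw [zero_mul, neg_zero, Real.exp_zero] at hlt
  calc ((2 * (x : ℝ) ^ 6 + 1) * (2 * x ^ 36 + 1) : ℝ)
        * (2 * Real.exp (-(Λ / 2 * x)) / (1 / x ^ 6 * Real.exp (-(Λ / 8 * x)) ^ 2))
      ≤ (3 * x ^ 6 * (3 * x ^ 36))
        * (2 * Real.exp (-(Λ / 2 * x)) / (1 / x ^ 6 * Real.exp (-(Λ / 8 * x)) ^ 2)) := by
        gcongr <;> linarith
    _ = 9 * (2 * x ^ 48) * (Real.exp (-(Λ / 2 * x)) / Real.exp (-(2 * (Λ / 8) * x))) := by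
        rw [exp_neg_mul_sq]
        field
    _ = 9 * (2 * x ^ 48) * Real.exp (-(Λ / 4 * x)) := by
        rw [← Real.exp_sub]
        ring_nf
    _ ≤ 1 / 2 := by nlinarith [Real.exp_pos (-(Λ / 4 * x))]

lemma eventually_step_le {Λ : ℝ} (hΛ : 0 < Λ) :
    ∀ᶠ x : ℕ in atTop, 2 * (8 * Real.exp (-(Λ / 8 * x)) ^ 2 / Real.exp (-(Λ / 16 * x)) ^ 2
      + (2 * (x : ℝ) ^ 36 + 1) * Real.exp (-(Λ / 8 * x)) ^ 2) ≤ Real.exp (-(Λ / 32 * x)) ^ 2 := by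
  filter_upwards [eventually_mul_exp_lt_exp (32 / 3) 0 (show Λ / 16 < Λ / 8 by linarith),
    eventually_mul_exp_lt_exp 4 36 (show Λ / 16 < Λ / 4 by linarith)] with x hx₁ hx₂
  simp only [exp_neg_mul_sq, mul_div_assoc, ← Real.exp_sub]
  ring_nf at hx₁ hx₂ ⊢
  linarith

lemma eventually_scaleBounds {M : ℝ} (hM : 0 ≤ M) {Λ : ℝ}
    (hΛ : 32 * (Real.log (2 * M + 4) + 1) ≤ Λ) :
    ∀ᶠ x in atTop, ScaleBounds M Λ x (x ^ 6) ((x ^ 6) ^ 6) := by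
  have hlog : 0 ≤ Real.log (2 * M + 4) := Real.log_nonneg (by linarith)
  have hΛ0 : 0 < Λ := by linarith
  have h6 : Tendsto (fun x : ℕ => x ^ 6) atTop atTop := tendsto_pow_atTop (by norm_num)
  filter_upwards [eventually_ge_atTop 2,
    eventually_mul_exp_lt_exp 4 36 (show 0 < Λ / 4 by positivity),
    h6.eventually (eventually_mul_exp_lt_exp (4 / 3) 1 two_pos),
    h6.eventually (eventually_gap_mul_le hM hΛ),
    eventually_mul_exp_lt_exp 2 0 (show Λ < 2 * Λ by linarith),
    eventually_mul_exp_lt_exp 2 0 (show Λ / 16 < Λ / 2 by linarith),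
    eventually_step_le hΛ0,
    eventually_mul_exp_lt_exp 2 0 (show Λ / 32 < Λ by linarith),
    eventually_shell_probability_le hΛ0, h6.eventually (eventually_boundaryBound_lt hM Λ)]
    with x hx shell core gap edge window step halving prob₁ prob₂
  have h32 := mul_le_pow_six hx
  have h32R : 32 * (x : ℝ) ≤ x ^ 6 := by exact_mod_cast h32
  have h36 : ((x : ℝ) ^ 6) ^ 6 = x ^ 36 := by ring
  have hmono : Real.exp (-(Λ / 32 * x ^ 6)) ≤ Real.exp (-(Λ * x)) :=
    Real.exp_le_exp.2 (by nlinarith)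
  simp only [zero_mul, neg_zero, Real.exp_zero] at shell core
  push_cast at core prob₂
  constructor <;> push_cast
  case two_le => exact hx
  case lt_inner => omega
  case inner_add_three_le => linarith [mul_le_pow_six (n := x ^ 6) (by omega)]
  case shell => rw [h36, exp_neg_mul_sq, show 2 * (Λ / 8) = Λ / 4 by ring]; linarith
  case core => rw [← Real.exp_nat_mul, mul_neg, Nat.cast_ofNat]; linarith
  case gap_le => exact Real.exp_le_exp.2 (by nlinarith)
  case gap_mul_le => exact_mod_cast gap
  case edge =>
    rw [exp_neg_mul_sq, exp_neg_mul_sq, mul_div_cancel₀ Λ two_ne_zero]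
    linarith [Real.exp_pos (-(2 * Λ * x))]
  case window => linarith [Real.exp_pos (-(Λ / 2 * x))]
  case step => rwa [h36]
  case halving => linarith [Real.exp_pos (-(Λ * x))]
  case probability => rw [h36]; linarith

end ScaleBounds

/-! ### Towers of potentials -/

section SquareSummable

variable {ι : Type*} (f g : lp (fun _ : ι => ℝ) 2) {s : Finset ι}

lemma exists_lp_coe_eq {φ : ι → ℝ} (hφ : ∀ i ∉ s, φ i = 0) :
    ∃ f : lp (fun _ : ι => ℝ) 2, f = φ :=
  ⟨⟨φ, memℓp_gen (summable_of_ne_finset_zero (s := s) fun i hi => by simp [hφ i hi])⟩, rfl⟩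

lemma inner_eq_sum_of_eq_zero (hg : ∀ i ∉ s, g i = 0) : inner ℝ f g = ∑ i ∈ s, g i * f i := by
  rw [lp.inner_eq_tsum, tsum_eq_sum (s := s) fun i hi => by simp [hg i hi]]
  simp

lemma norm_sq_eq_sum_of_eq_zero (hg : ∀ i ∉ s, g i = 0) : ‖g‖ ^ 2 = ∑ i ∈ s, g i ^ 2 := by
  rw [← real_inner_self_eq_norm_sq, inner_eq_sum_of_eq_zero g g hg]
  simp only [sq]

lemma sum_sq_le_norm_sq (s : Finset ι) : ∑ i ∈ s, f i ^ 2 ≤ ‖f‖ ^ 2 := by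
  have hsum := lp.hasSum_inner (𝕜 := ℝ) f f
  rw [real_inner_self_eq_norm_sq] at hsum
  simpa [sq] using sum_le_hasSum s (fun i _ => real_inner_self_nonneg) hsum

end SquareSummable

lemma isEigenfunction_of_tendsto {ι : Type*} {l : Filter ι} [l.NeBot] {U : ℤ → ℝ} {e : ι → ℝ}
    {E : ℝ} {Φ : ι → lp (fun _ : ℤ => ℝ) 2} {Ψ : lp (fun _ : ℤ => ℝ) 2}
    (he : Filter.Tendsto e l (nhds E)) (hΦ : Filter.Tendsto Φ l (nhds Ψ)) (hΨ : Ψ ≠ 0)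
    (heq : ∀ n, ∀ᶠ j in l, schrodinger U (Φ j) n = e j * Φ j n) : IsEigenfunction U E Ψ := by
  have hcoord (n : ℤ) : Filter.Tendsto (fun j => Φ j n) l (nhds (Ψ n)) :=
    tendsto_pi_nhds.1 ((lp.uniformContinuous_coe.continuous.tendsto Ψ).comp hΦ) n
  refine ⟨hΨ, fun n => tendsto_nhds_unique ?_ (he.mul (hcoord n))⟩
  exact (((hcoord (n + 1)).add (hcoord (n - 1))).add ((hcoord n).const_mul (U n))).congr' (heq n)

/-- `IsNonresonant` with box sizes `N`, `N'` and thresholds decaying exponentially in the length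
scale `x` and in `N`, as in `ScaleBounds`. -/
abbrev IsScaleNonresonant (Λ : ℝ) (x N N' : ℕ) (U U' : ℤ → ℝ) : Prop :=
  IsNonresonant U U' N N' (Real.exp (-(Λ / 2 * x))) (Real.exp (-(Λ / 8 * x))) (Real.exp (-N))
    (Real.exp (-(Λ * N)))

/-- A tower of potentials: each `P (k + 1)` is nonresonant relative to `P k` along the scales `s`,
and the potentials stabilize to `U` on every box. -/
structure IsPotentialTower (M Λ : ℝ) (s : ℕ → ℕ) (P : ℕ → ℤ → ℝ) (U : ℤ → ℝ) : Prop where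
  le_rate : 32 ≤ Λ
  scale_succ : ∀ k, s (k + 1) = s k ^ 6
  bounds : ∀ k, ScaleBounds M Λ (s k) (s (k + 1)) (s (k + 2))
  abs_le : ∀ k n, |P k n| ≤ M
  nonresonant : ∀ k, IsScaleNonresonant Λ (s k) (s (k + 1)) (s (k + 2)) (P k) (P (k + 1))
  eq_on_box : ∀ k, ∀ n ∈ latticeBox (s (k + 1)), U n = P k n

/-- A localized eigenvector at level `k` of a tower: its box is `[-s (k + 1), s (k + 1)]`, and the
bound at the edge and the gap are governed by the length scale `s k`. -/
abbrev IsTowerEigenvector (Λ : ℝ) (s : ℕ → ℕ) (P : ℕ → ℤ → ℝ) (k : ℕ) (e : ℝ) (ψ : ℤ → ℝ) : Prop :=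
  IsLocalizedEigenvector (P k) (s (k + 1)) (Real.exp (-(Λ * s k))) (Real.exp (-(Λ / 16 * s k))) e ψ

namespace IsPotentialTower

variable {M Λ e E : ℝ} {s : ℕ → ℕ} {P : ℕ → ℤ → ℝ} {U : ℤ → ℝ} {k : ℕ}

lemma strictMono_scale (T : IsPotentialTower M Λ s P U) : StrictMono s :=
  strictMono_nat_of_lt_succ fun k => (T.bounds k).lt_inner

lemma one_le_scale (T : IsPotentialTower M Λ s P U) (k : ℕ) : (1 : ℝ) ≤ s k := by
  exact_mod_cast one_le_two.trans (T.bounds k).two_le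

lemma mem_latticeBox_scale (T : IsPotentialTower M Λ s P U) {n : ℤ} (hn : n.natAbs ≤ k) :
    n ∈ latticeBox (s k) := by
  have hk : k ≤ s k := T.strictMono_scale.id_le k
  rw [latticeBox, Finset.mem_Icc]
  omega

lemma isTowerEigenvector_succ (T : IsPotentialTower M Λ s P U) {ψ φ : ℤ → ℝ}
    (hψ : IsBoxEigenvector (P k) (s (k + 1)) e ψ)
    (hφ : IsBoxEigenvector (P (k + 1)) (s (k + 2)) E φ)
    (hE : |E - e| ≤ Real.exp (-(Λ / 2 * s k))) : IsTowerEigenvector Λ s P (k + 1) E φ :=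
  have B := T.bounds k
  (T.nonresonant k).isLocalizedEigenvector (T.abs_le _) (T.strictMono_scale (by simp)).le B.shell
    (Real.exp_pos _).le B.core B.gap_le B.gap_mul_le hψ hφ hE

lemma exists_isTowerEigenvector_succ (T : IsPotentialTower M Λ s P U)
    {ψ : lp (fun _ : ℤ => ℝ) 2} (hψ : IsTowerEigenvector Λ s P k e ψ) :
    ∃ (E : ℝ) (φ : lp (fun _ : ℤ => ℝ) 2), IsTowerEigenvector Λ s P (k + 1) E φ ∧
      dist e E ≤ Real.exp (-(Λ / 32 * s k)) ∧ dist ψ φ ≤ Real.exp (-(Λ / 32 * s k)) := by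
  have B := T.bounds k
  have hlt : s (k + 1) < s (k + 2) := T.strictMono_scale (by simp)
  obtain ⟨E, φ, hφ, hE, hdist⟩ := (T.nonresonant k).exists_isLocalizedEigenvector (T.abs_le _)
    (by linarith [B.two_le, B.lt_inner]) hlt B.shell (Real.exp_pos _).le B.core B.gap_le
    B.gap_mul_le (Real.exp_pos _) B.edge B.window hψ
  obtain ⟨φ, rfl⟩ := exists_lp_coe_eq hφ.eq_zero
  refine ⟨E, φ, hφ, ?_, ?_⟩
  · rw [dist_comm, Real.dist_eq]
    refine hE.trans (Real.exp_le_exp.2 (neg_le_neg ?_))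
    gcongr
    · linarith [T.le_rate]
    · norm_num
  · have hzero : ∀ n ∉ latticeBox (s (k + 2)), (φ - ψ) n = 0 := fun n hn => by
      rw [lp.coeFn_sub, Pi.sub_apply, hφ.eq_zero n hn,
        hψ.eq_zero n fun h => hn (latticeBox_mono hlt.le h), sub_zero]
    rw [dist_comm, dist_eq_norm, ← sq_le_sq₀ (norm_nonneg _) (Real.exp_pos _).le,
      norm_sq_eq_sum_of_eq_zero _ hzero]
    exact hdist.trans B.step

lemma exists_isTowerEigenvector_seq (T : IsPotentialTower M Λ s P U)
    {ψ : lp (fun _ : ℤ => ℝ) 2} (hψ : IsTowerEigenvector Λ s P k e ψ) :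
    ∃ (E : ℕ → ℝ) (φ : ℕ → lp (fun _ : ℤ => ℝ) 2), φ 0 = ψ ∧
      ∀ j, IsTowerEigenvector Λ s P (k + j) (E j) (φ j) ∧
        dist (E j) (E (j + 1)) ≤ Real.exp (-(Λ / 32 * s (k + j))) ∧
        dist (φ j) (φ (j + 1)) ≤ Real.exp (-(Λ / 32 * s (k + j))) := by
  choose! E' φ' hstep hE' hφ' using fun j (e : ℝ) (ψ : lp (fun _ : ℤ => ℝ) 2)
    (h : IsTowerEigenvector Λ s P (k + j) e ψ) => T.exists_isTowerEigenvector_succ h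
  let a : ℕ → ℝ × lp (fun _ : ℤ => ℝ) 2 :=
    fun j => Nat.rec (e, ψ) (fun j p => (E' j p.1 p.2, φ' j p.1 p.2)) j
  have ha (j : ℕ) : IsTowerEigenvector Λ s P (k + j) (a j).1 (a j).2 := by
    induction j with
    | zero => exact hψ
    | succ j ih => exact hstep j _ _ ih
  exact ⟨fun j => (a j).1, fun j => (a j).2, rfl,
    fun j => ⟨ha j, hE' j _ _ (ha j), hφ' j _ _ (ha j)⟩⟩

lemma exp_scale_add_le (T : IsPotentialTower M Λ s P U) (k j : ℕ) :
    Real.exp (-(Λ / 32 * s (k + j))) ≤ 2 * Real.exp (-(Λ / 32 * s k)) / 2 / 2 ^ j := by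
  induction j with
  | zero => simp
  | succ j ih =>
    calc Real.exp (-(Λ / 32 * s (k + (j + 1))))
        ≤ Real.exp (-(Λ / 32 * s (k + j))) / 2 := (T.bounds (k + j)).halving
      _ ≤ 2 * Real.exp (-(Λ / 32 * s k)) / 2 / 2 ^ j / 2 := by gcongr
      _ = 2 * Real.exp (-(Λ / 32 * s k)) / 2 / 2 ^ (j + 1) := by rw [pow_succ, div_div]

lemma two_mul_exp_scale_lt_one (T : IsPotentialTower M Λ s P U) (k : ℕ) :
    2 * Real.exp (-(Λ / 32 * s k)) < 1 := by
  have hs : (2 : ℝ) ≤ s k := by exact_mod_cast (T.bounds k).two_le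
  have hexp : Real.exp (-(Λ / 32 * s k)) ≤ Real.exp (-1) :=
    Real.exp_le_exp.2 (by nlinarith [T.le_rate])
  linarith [Real.exp_neg_one_lt_half]

lemma exists_isEigenfunction (T : IsPotentialTower M Λ s P U) {ψ : lp (fun _ : ℤ => ℝ) 2}
    (hψ : IsTowerEigenvector Λ s P k e ψ) :
    ∃ E Ψ, IsEigenfunction U E Ψ ∧ dist ψ Ψ ≤ 2 * Real.exp (-(Λ / 32 * s k)) := by
  obtain ⟨e, φ, rfl, h⟩ := T.exists_isTowerEigenvector_seq hψ
  have hgeom := T.exp_scale_add_le k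
  have he (j : ℕ) := (h j).2.1.trans (hgeom j)
  have hφ (j : ℕ) := (h j).2.2.trans (hgeom j)
  obtain ⟨E, hE⟩ := cauchySeq_tendsto_of_complete (cauchySeq_of_le_geometric_two he)
  obtain ⟨Ψ, hΨ⟩ := cauchySeq_tendsto_of_complete (cauchySeq_of_le_geometric_two hφ)
  have hdist : dist (φ 0) Ψ ≤ 2 * Real.exp (-(Λ / 32 * s k)) :=
    dist_le_of_le_geometric_two_of_tendsto₀ hφ hΨ
  refine ⟨E, Ψ, isEigenfunction_of_tendsto hE hΨ ?_ fun n => ?_, hdist⟩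
  · rintro rfl
    have hnorm : ‖φ 0‖ ^ 2 = 1 := by
      rw [norm_sq_eq_sum_of_eq_zero _ (h 0).1.eq_zero, (h 0).1.sum_sq]
    rw [dist_zero_right] at hdist
    nlinarith [T.two_mul_exp_scale_lt_one k, norm_nonneg (φ 0)]
  · filter_upwards [Filter.eventually_ge_atTop n.natAbs] with j hj
    have hn : n ∈ latticeBox (s (k + j + 1)) := T.mem_latticeBox_scale (by omega)
    rw [schrodinger, T.eq_on_box _ n hn]
    exact (h j).1.schrodinger_eq n hn

variable {f : lp (fun _ : ℤ => ℝ) 2}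

lemma abs_sum_mul_le_of_isTowerEigenvector (T : IsPotentialTower M Λ s P U)
    (hf : ∀ E Ψ, IsEigenfunction U E Ψ → inner ℝ f Ψ = 0) {ψ : ℤ → ℝ}
    (hψ : IsTowerEigenvector Λ s P k e ψ) :
    |∑ n ∈ latticeBox (s (k + 1)), ψ n * f n| ≤ 2 * Real.exp (-(Λ / 32 * s k)) * ‖f‖ := by
  obtain ⟨ψ, rfl⟩ := exists_lp_coe_eq hψ.eq_zero
  obtain ⟨E, Ψ, hΨ, hdist⟩ := T.exists_isEigenfunction hψ
  calc |∑ n ∈ latticeBox (s (k + 1)), ψ n * f n|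
      = |inner ℝ f (ψ - Ψ)| := by
        rw [← inner_eq_sum_of_eq_zero f ψ hψ.eq_zero, inner_sub_right, hf E Ψ hΨ, sub_zero]
    _ ≤ ‖f‖ * dist ψ Ψ := by
        rw [dist_eq_norm]
        exact abs_real_inner_le_norm _ _
    _ ≤ 2 * Real.exp (-(Λ / 32 * s k)) * ‖f‖ := by
        rw [mul_comm]
        gcongr

lemma abs_sum_mul_le_of_abs_edge_le (T : IsPotentialTower M Λ s P U)
    (hf : ∀ E Ψ, IsEigenfunction U E Ψ → inner ℝ f Ψ = 0) {ψ : ℤ → ℝ}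
    (hψ : IsBoxEigenvector (P k) (s (k + 1)) e ψ)
    (hedge : ∀ σ : ℤˣ, |ψ (σ * s (k + 1))| ≤ Real.exp (-(Λ * s k))) :
    |∑ n ∈ latticeBox (s (k + 1)), ψ n * f n|
      ≤ 8 * ‖f‖ * (s k : ℝ) ^ 36 * Real.exp (-(1 * s k)) := by
  have H := T.nonresonant k
  have hs : s (k + 1) < s (k + 2) := T.strictMono_scale (by simp)
  obtain ⟨E, φ, hb⟩ := exists_isBoxEigenbasis (P (k + 1)) (s (k + 2))
  have hsum := hb.abs_sum_mul_le (hψ.congr H.eq_on_box) hs hedge (Real.exp_pos _) (norm_nonneg f)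
    (sum_sq_le_norm_sq f _) (by positivity) fun j hj => T.abs_sum_mul_le_of_isTowerEigenvector hf
      (T.isTowerEigenvector_succ hψ (hb.isBoxEigenvector j) hj)
  have hΛ := T.le_rate
  have hx := T.one_le_scale k
  have hsize : (s (k + 2) : ℝ) = (s k : ℝ) ^ 36 := by
    rw [T.scale_succ, T.scale_succ]
    push_cast
    ring
  have hlt : (s k : ℝ) ≤ s (k + 1) := by exact_mod_cast (T.bounds k).lt_inner.le
  have hexp : Real.exp (-(Λ / 32 * s (k + 1))) ≤ Real.exp (-(1 * s k)) :=
    Real.exp_le_exp.2 (by nlinarith)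
  have hratio : Real.exp (-(Λ * s k)) / Real.exp (-(Λ / 2 * s k)) ≤ Real.exp (-(1 * s k)) := by
    rw [← Real.exp_sub]
    exact Real.exp_le_exp.2 (by nlinarith)
  have hpow : 1 ≤ (s k : ℝ) ^ 36 := one_le_pow₀ hx
  generalize (s k : ℝ) ^ 36 = y at *
  calc |∑ n ∈ latticeBox (s (k + 1)), ψ n * f n|
      ≤ (2 * y + 1) * (2 * Real.exp (-(Λ / 32 * s (k + 1))) * ‖f‖)
        + 2 * ‖f‖ * (Real.exp (-(Λ * s k)) / Real.exp (-(Λ / 2 * s k))) * 1 := by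
        rw [← hsize]
        exact hsum.trans_eq (by ring)
    _ ≤ (2 * y + y) * (2 * Real.exp (-(1 * s k)) * ‖f‖)
        + 2 * ‖f‖ * Real.exp (-(1 * s k)) * y := by gcongr
    _ = 8 * ‖f‖ * y * Real.exp (-(1 * s k)) := by ring

lemma abs_mul_sum_mul_le (T : IsPotentialTower M Λ s P U)
    (hf : ∀ E Ψ, IsEigenfunction U E Ψ → inner ℝ f Ψ = 0) {ψ : ℤ → ℝ}
    (hψ : IsBoxEigenvector (P (k + 1)) (s (k + 2)) e ψ) {m : ℤ} (hm : m ∈ latticeBox (s (k + 1))) :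
    |ψ m * ∑ n ∈ latticeBox (s (k + 2)), ψ n * f n|
      ≤ 8 * ‖f‖ * (s (k + 1) : ℝ) ^ 36 * Real.exp (-(1 * s (k + 1))) := by
  have hpow : 1 ≤ (s (k + 1) : ℝ) ^ 36 := one_le_pow₀ (T.one_le_scale _)
  have hcoeff : |∑ n ∈ latticeBox (s (k + 2)), ψ n * f n| ≤ ‖f‖ := by
    refine abs_le_of_sq_le_sq ((Finset.sum_mul_sq_le_sq_mul_sq _ _ _).trans ?_) (norm_nonneg f)
    rw [hψ.sum_sq, one_mul]
    exact sum_sq_le_norm_sq f _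
  rw [abs_mul]
  rcases le_or_gt (Real.exp (-(s (k + 1)))) |ψ m| with hlarge | hsmall
  · have hedge := (T.nonresonant k).abs_edge_le _ _ hψ m hm hlarge
    exact (mul_le_of_le_one_left (abs_nonneg _) (hψ.abs_le_one m)).trans
      (T.abs_sum_mul_le_of_abs_edge_le hf hψ hedge)
  · calc |ψ m| * |∑ n ∈ latticeBox (s (k + 2)), ψ n * f n|
        ≤ Real.exp (-(s (k + 1))) * ‖f‖ := by gcongr
      _ = 1 * ‖f‖ * 1 * Real.exp (-(1 * s (k + 1))) := by rw [one_mul (s (k + 1) : ℝ)]; ring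
      _ ≤ 8 * ‖f‖ * (s (k + 1) : ℝ) ^ 36 * Real.exp (-(1 * s (k + 1))) := by gcongr; norm_num

lemma abs_apply_le (T : IsPotentialTower M Λ s P U)
    (hf : ∀ E Ψ, IsEigenfunction U E Ψ → inner ℝ f Ψ = 0) {m : ℤ}
    (hm : m ∈ latticeBox (s (k + 1))) :
    |f m| ≤ 24 * ‖f‖ * ((s (k + 1) : ℝ) ^ 42 * Real.exp (-(1 * s (k + 1)))) := by
  obtain ⟨E, ψ, hb⟩ := exists_isBoxEigenbasis (P (k + 1)) (s (k + 2))
  have hm' : m ∈ latticeBox (s (k + 2)) := latticeBox_mono (T.strictMono_scale (by simp)).le hm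
  have hparseval : ∑ j, ψ j m * ∑ n ∈ latticeBox (s (k + 2)), ψ j n * f n = f m := by
    simpa [Pi.single_apply, hm'] using hb.sum_mul_sum (Pi.single m 1) f
  have hsize : (s (k + 2) : ℝ) = (s (k + 1) : ℝ) ^ 6 := by exact_mod_cast T.scale_succ (k + 1)
  have hpow : 1 ≤ (s (k + 1) : ℝ) ^ 6 := one_le_pow₀ (T.one_le_scale _)
  calc |f m|
      ≤ ∑ j, |ψ j m * ∑ n ∈ latticeBox (s (k + 2)), ψ j n * f n| := by
        rw [← hparseval]
        exact Finset.abs_sum_le_sum_abs _ _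
    _ ≤ (2 * (s (k + 1) : ℝ) ^ 6 + 1)
          * (8 * ‖f‖ * (s (k + 1) : ℝ) ^ 36 * Real.exp (-(1 * s (k + 1)))) := by
        refine (Finset.sum_le_card_nsmul _ _ _
          fun j _ => T.abs_mul_sum_mul_le hf (hb.isBoxEigenvector j) hm).trans_eq ?_
        rw [Finset.card_univ, Fintype.card_fin, nsmul_eq_mul, ← hsize]
        push_cast
        rfl
    _ ≤ (2 * (s (k + 1) : ℝ) ^ 6 + (s (k + 1) : ℝ) ^ 6)
          * (8 * ‖f‖ * (s (k + 1) : ℝ) ^ 36 * Real.exp (-(1 * s (k + 1)))) := by gcongr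
    _ = 24 * ‖f‖ * ((s (k + 1) : ℝ) ^ 42 * Real.exp (-(1 * s (k + 1)))) := by ring

lemma hasPurePointSpectrum (T : IsPotentialTower M Λ s P U) : HasPurePointSpectrum U := by
  rw [HasPurePointSpectrum, Submodule.topologicalClosure_eq_top_iff, Submodule.eq_bot_iff]
  intro f hf
  have hf' (E : ℝ) (Ψ : lp (fun _ : ℤ => ℝ) 2) (hΨ : IsEigenfunction U E Ψ) : inner ℝ f Ψ = 0 :=
    (Submodule.mem_orthogonal' _ f).1 hf Ψ (Submodule.subset_span ⟨E, hΨ⟩)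
  have hlim := ((tendsto_pow_mul_exp_neg_mul 42 one_pos).comp (T.strictMono_scale.tendsto_atTop.comp
    (Filter.tendsto_add_atTop_nat 1))).const_mul (24 * ‖f‖)
  rw [mul_zero] at hlim
  ext m
  refine abs_nonpos_iff.1 (ge_of_tendsto hlim ?_)
  filter_upwards [Filter.eventually_ge_atTop m.natAbs] with k hk
  exact T.abs_apply_le hf' (T.mem_latticeBox_scale (by omega))

end IsPotentialTower

lemma IsNonresonant.congr {U U' U'' : ℤ → ℝ} {N N' : ℕ} {h κ₁ κ₂ δ : ℝ}
    (H : IsNonresonant U U' N N' h κ₁ κ₂ δ) (hN : N ≤ N')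
    (hU : ∀ n ∈ latticeBox N', U' n = U'' n) : IsNonresonant U U'' N N' h κ₁ κ₂ δ where
  eq_on_box n hn := by rw [← hU n (latticeBox_mono hN hn), H.eq_on_box n hn]
  abs_shell_le e ψ E φ hψ hφ := H.abs_shell_le e ψ E φ hψ (hφ.congr hU)
  abs_edge_le E φ hφ := H.abs_edge_le E φ (hφ.congr hU)

lemma IsPeriodicPotential.add {W W' : ℤ → ℝ} (h : IsPeriodicPotential W)
    (h' : IsPeriodicPotential W') : IsPeriodicPotential (W + W') := by
  obtain ⟨p, hp, hW⟩ := h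
  obtain ⟨q, hq, hW'⟩ := h'
  have hWq : Function.Periodic W ((q * p : ℕ) : ℤ) := by
    simpa using Function.Periodic.nat_mul hW q
  have hWp' : Function.Periodic W' ((q * p : ℕ) : ℤ) := by
    simpa [mul_comm] using Function.Periodic.nat_mul hW' p
  exact ⟨q * p, Nat.mul_pos hq hp, hWq.add hWp'⟩

lemma isPeriodicPotential_comp_bmod (w : ℤ → ℝ) {p : ℕ} (hp : 0 < p) :
    IsPeriodicPotential fun n => w (n.bmod p) :=
  ⟨p, hp, fun n => congrArg w (Int.add_bmod_right n p)⟩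

lemma bmod_eq_self_of_mem_latticeBox {N : ℕ} {n : ℤ} (hn : n ∈ latticeBox N) :
    n.bmod (2 * N + 1) = n := by
  rw [latticeBox, Finset.mem_Icc] at hn
  exact Int.bmod_eq_of_le (by omega) (by omega)

lemma ScaleBounds.exists_isScaleNonresonant {M Λ : ℝ} {x N N' : ℕ} (B : ScaleBounds M Λ x N N')
    {U : ℤ → ℝ} (hU : ∀ n, |U n| ≤ M - 1) :
    ∃ W : ℤ → ℝ, IsPeriodicPotential W ∧ (∀ n, |W n| ≤ 1 / N) ∧
      IsScaleNonresonant Λ x N N' U (U + W) := by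
  have hN : 1 ≤ N := Nat.one_le_iff_ne_zero.2 (Nat.ne_zero_of_lt B.lt_inner)
  obtain ⟨w, hw, -, H⟩ := exists_isNonresonant (by positivity)
    (div_le_one_of_le₀ (by exact_mod_cast hN) (by positivity)) hU B.inner_add_three_le
    (Real.exp_pos _) (Real.exp_pos _) (Real.exp_pos _) (Real.exp_pos _) B.probability
  refine ⟨fun n => w (n.bmod (2 * N' + 1 : ℕ)), isPeriodicPotential_comp_bmod w (by simp),
    fun n => hw _, H.congr (Nat.le_of_add_right_le B.inner_add_three_le) fun n hn => ?_⟩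
  simp only [Pi.add_apply, bmod_eq_self_of_mem_latticeBox hn]

lemma mul_two_pow_le_pow_pow {x : ℕ} (hx : 2 ≤ x) (k : ℕ) : x * 2 ^ k ≤ x ^ 6 ^ k := by
  have hexp : k + 1 ≤ 6 ^ k := Nat.lt_pow_self (by norm_num)
  calc x * 2 ^ k ≤ x * x ^ k := by gcongr
    _ = x ^ (k + 1) := (pow_succ' x k).symm
    _ ≤ x ^ 6 ^ k := Nat.pow_le_pow_right (by omega) hexp

lemma exists_isScaleNonresonant_seq {M Λ r : ℝ} {s : ℕ → ℕ} {V : ℤ → ℝ}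
    (hV : ∀ n, |V n| ≤ M - 2) (hr : r ≤ 1) (hs : ∀ k, 1 / (s (k + 1) : ℝ) ≤ r / 2 / 2 ^ k)
    (hB : ∀ k, ScaleBounds M Λ (s k) (s (k + 1)) (s (k + 2))) :
    ∃ P : ℕ → ℤ → ℝ, P 0 = V ∧ ∀ k, IsPeriodicPotential (P k - V) ∧ (∀ n, |P k n| ≤ M - 1) ∧
      (∀ n, dist (P k n) (P (k + 1) n) ≤ r / 2 / 2 ^ k) ∧
      IsScaleNonresonant Λ (s k) (s (k + 1)) (s (k + 2)) (P k) (P (k + 1)) := by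
  choose! W hper hsmall hnonres using fun k (Q : ℤ → ℝ) (hQ : ∀ n, |Q n| ≤ M - 1) =>
    (hB k).exists_isScaleNonresonant hQ
  let P : ℕ → ℤ → ℝ := fun k => Nat.rec V (fun k Q => Q + W k Q) k
  have hdist (k : ℕ) (hP : ∀ n, |P k n| ≤ M - 1) (n : ℤ) :
      dist (P k n) (P (k + 1) n) ≤ r / 2 / 2 ^ k := by
    calc dist (P k n) (P (k + 1) n) = |W k (P k) n| := by
          rw [dist_comm, Real.dist_eq]
          exact congrArg _ (add_sub_cancel_left _ _)
      _ ≤ r / 2 / 2 ^ k := (hsmall k _ hP n).trans (hs k)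
  have hbound (k : ℕ) (n : ℤ) (h : dist (P k n) (V n) ≤ 1 - 1 / 2 ^ k) : |P k n| ≤ M - 1 := by
    have hpos : (0 : ℝ) < 1 / 2 ^ k := by positivity
    linarith [abs_sub_abs_le_abs_sub (P k n) (V n), Real.dist_eq (P k n) (V n), hV n]
  have hnear (k : ℕ) : ∀ n, dist (P k n) (V n) ≤ 1 - 1 / 2 ^ k := by
    induction k with
    | zero => simp [P]
    | succ k ih =>
      intro n
      calc dist (P (k + 1) n) (V n) ≤ dist (P k n) (P (k + 1) n) + dist (P k n) (V n) :=
            dist_triangle_left _ _ _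
        _ ≤ 1 / 2 / 2 ^ k + (1 - 1 / 2 ^ k) := by
            refine add_le_add ((hdist k (fun n => hbound k n (ih n)) n).trans ?_) (ih n)
            gcongr
        _ = 1 - 1 / 2 ^ (k + 1) := by rw [pow_succ]; field_simp; ring
  have hP (k : ℕ) (n : ℤ) : |P k n| ≤ M - 1 := hbound k n (hnear k n)
  refine ⟨P, rfl, fun k => ⟨?_, hP k, hdist k (hP k), hnonres k _ (hP k)⟩⟩
  induction k with
  | zero => exact ⟨1, one_pos, by simp [P]⟩
  | succ k ih =>
    have hsub : P (k + 1) - V = P k - V + W k (P k) := sub_add_eq_add_sub _ _ _ |>.symm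
    exact hsub ▸ ih.add (hper k _ (hP k))

lemma exists_limit_of_eq_on_latticeBox {s : ℕ → ℕ} (hs : StrictMono s) {P : ℕ → ℤ → ℝ}
    (hP : ∀ k, ∀ n ∈ latticeBox (s (k + 1)), P (k + 1) n = P k n) :
    ∃ U : ℤ → ℝ, (∀ k, ∀ n ∈ latticeBox (s (k + 1)), U n = P k n) ∧
      ∀ n, Filter.Tendsto (P · n) Filter.atTop (nhds (U n)) := by
  have hstable {k l : ℕ} (hkl : k ≤ l) : ∀ n ∈ latticeBox (s (k + 1)), P l n = P k n := by
    intro n hn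
    induction l, hkl using Nat.le_induction with
    | base => rfl
    | succ l hkl ih => rw [hP l n (latticeBox_mono (hs.monotone (by omega)) hn), ih]
  have hmem (n : ℤ) : n ∈ latticeBox (s (n.natAbs + 1)) := by
    have hle : n.natAbs + 1 ≤ s (n.natAbs + 1) := hs.id_le _
    rw [latticeBox, Finset.mem_Icc]
    omega
  refine ⟨fun n => P n.natAbs n, fun k n hn => ?_, fun n =>
    tendsto_atTop_of_eventually_const fun l hl => hstable hl n (hmem n)⟩
  rcases le_total k n.natAbs with h | h
  · exact hstable h n hn
  · exact (hstable h n (hmem n)).symm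

lemma exists_isPotentialTower {M Λ : ℝ} {x : ℕ} {V : ℤ → ℝ} (hΛ : 32 ≤ Λ)
    (hV : ∀ n, |V n| ≤ M - 2) (hx : ∀ y ≥ x, ScaleBounds M Λ y (y ^ 6) ((y ^ 6) ^ 6)) :
    ∃ s P U, IsPotentialTower M Λ s P U ∧ P 0 = V ∧
      ∀ k, IsPeriodicPotential (P k - V) ∧ ∀ n, dist (P k n) (U n) ≤ 1 / x / 2 ^ k := by
  have hx2 : 2 ≤ x := (hx x le_rfl).two_le
  let s : ℕ → ℕ := fun k => x ^ 6 ^ k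
  have hsucc (k : ℕ) : s (k + 1) = s k ^ 6 := by simp only [s, pow_succ, pow_mul]
  have hgrowth (k : ℕ) : x * 2 ^ k ≤ s k := mul_two_pow_le_pow_pow hx2 k
  have hB (k : ℕ) : ScaleBounds M Λ (s k) (s (k + 1)) (s (k + 2)) := by
    rw [hsucc (k + 1), hsucc k]
    exact hx _ ((Nat.le_mul_of_pos_right x (by positivity)).trans (hgrowth k))
  have hinv (k : ℕ) : 1 / (s (k + 1) : ℝ) ≤ 1 / x / 2 / 2 ^ k := by
    rw [div_div, div_div, ← pow_succ']
    exact one_div_le_one_div_of_le (by positivity) (by exact_mod_cast hgrowth (k + 1))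
  have hx1 : 1 / (x : ℝ) ≤ 1 :=
    div_le_one_of_le₀ (by exact_mod_cast one_le_two.trans hx2) (by positivity)
  obtain ⟨P, hP0, hP⟩ := exists_isScaleNonresonant_seq hV hx1 hinv hB
  obtain ⟨U, hU, hlim⟩ := exists_limit_of_eq_on_latticeBox
    (strictMono_nat_of_lt_succ fun k => (hB k).lt_inner) fun k => (hP k).2.2.2.eq_on_box
  exact ⟨s, P, U, {
      le_rate := hΛ
      scale_succ := hsucc
      bounds := hB
      abs_le := fun k n => ((hP k).2.1 n).trans (by linarith)
      nonresonant := fun k => (hP k).2.2.2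
      eq_on_box := hU }, hP0, fun k => ⟨(hP k).1, fun n =>
    dist_le_of_le_geometric_two_of_tendsto (fun k => (hP k).2.2.1 n) (hlim n) k⟩⟩

/-- For every bounded `V` and every `ε > 0` there is a limit-periodic `V_lp` with
`‖V_lp‖_∞ < ε` such that the Schrödinger operator with potential `V + V_lp` has
pure point spectrum. -/
theorem purePoint_limitPeriodic_perturbation (V : ℤ → ℝ) (hV : ∃ M : ℝ, ∀ n : ℤ, |V n| ≤ M)
    (ε : ℝ) (hε : 0 < ε) :
    ∃ Vlp : ℤ → ℝ, IsLimitPeriodic Vlp ∧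
      (∃ C : ℝ, C < ε ∧ ∀ n : ℤ, |Vlp n| ≤ C) ∧
      HasPurePointSpectrum (fun n => V n + Vlp n) := by
  obtain ⟨M, hM⟩ := hV
  have hM0 : 0 ≤ M := (abs_nonneg _).trans (hM 0)
  have hlog : 0 ≤ Real.log (2 * (M + 2) + 4) := Real.log_nonneg (by linarith)
  obtain ⟨x, hx⟩ := Filter.eventually_atTop.1
    ((eventually_scaleBounds (M := M + 2) (by linarith) le_rfl).and
      (tendsto_one_div_atTop_nhds_zero_nat.eventually_lt_const hε))
  obtain ⟨s, P, U, T, hP0, hP⟩ := exists_isPotentialTower (by linarith)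
    (fun n => by simpa using hM n) fun y hy => (hx y hy).1
  have hlim : Filter.Tendsto (fun k : ℕ => 1 / (x : ℝ) / 2 ^ k) Filter.atTop (nhds 0) :=
    tendsto_const_nhds.div_atTop (tendsto_pow_atTop_atTop_of_one_lt one_lt_two)
  refine ⟨U - V, fun r hr => ?_, ⟨1 / x, (hx x le_rfl).2, fun n => ?_⟩, ?_⟩
  · obtain ⟨k, hk⟩ := (hlim.eventually_le_const hr).exists
    refine ⟨P k - V, (hP k).1, fun n => ?_⟩
    simpa [Real.dist_eq, abs_sub_comm] using ((hP k).2 n).trans hk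
  · simpa [Real.dist_eq, abs_sub_comm, hP0] using (hP 0).2 n
  · simpa using T.hasPurePointSpectrum
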